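/- arXiv:math/9302207 — 3 statements merged into one kernel-verified Lean document; each statement's English description precedes it below -/
import Mathlib

section
/- Let 2 < q < ∞ and let E be an n-dimensional real Banach space. There exist an absolute constant c₀ and a natural number m with m ≤ n · (c₀(1 + ln n))^{1/(1 − 2/q)} such that the Rademacher cotype q constant of the identity of E satisfies C_q(Id_E) ≤ 2 · C_q^m(Id_E). -/
open scoped ENNReal NNReal BigOperators

noncomputable section

/-- The `ℓ_p`-sum `(∑ i, f i ^ p) ^ (1/p)` of a finite family in `ℝ≥0∞`,
with the usual sup-modification for `p = ∞`. -/
def eSum (p : ℝ≥0∞) {ι : Type*} [Fintype ι] (f : ι → ℝ≥0∞) : ℝ≥0∞ :=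
  if p = ∞ then ⨆ i, f i else (∑ i, f i ^ p.toReal) ^ (1 / p.toReal)

/-- The weak `ℓ_q`-norm of a finite family of vectors:
`sup { (∑ k |⟨x_k, x*⟩|^q)^(1/q) : x* in the unit ball of the dual }`. -/
def weakLq (q : ℝ≥0∞) {X : Type*} [NormedAddCommGroup X] [NormedSpace ℝ X]
    {n : ℕ} (x : Fin n → X) : ℝ≥0∞ :=
  ⨆ f : {f : X →L[ℝ] ℝ // ‖f‖ ≤ 1}, eSum q fun k => ENNReal.ofReal |f.1 (x k)|

/-- The `(p,q)`-summing norm of `T` with respect to `n` vectors. -/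
def piN (p q : ℝ≥0∞) {X Y : Type*} [NormedAddCommGroup X] [NormedSpace ℝ X]
    [NormedAddCommGroup Y] [NormedSpace ℝ Y] (n : ℕ) (T : X →L[ℝ] Y) : ℝ≥0∞ :=
  ⨆ x : {x : Fin n → X // weakLq q x ≤ 1}, eSum p fun k => ENNReal.ofReal ‖T (x.1 k)‖

/-- The `(p,q)`-summing norm of `T`. -/
def piPQ (p q : ℝ≥0∞) {X Y : Type*} [NormedAddCommGroup X] [NormedSpace ℝ X]
    [NormedAddCommGroup Y] [NormedSpace ℝ Y] (T : X →L[ℝ] Y) : ℝ≥0∞ :=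
  ⨆ n : ℕ, piN p q n T

/-- `T` has rank at most `n`: its range is a finite-dimensional subspace of
dimension at most `n`. -/
def RankLE {X Y : Type*} [NormedAddCommGroup X] [NormedSpace ℝ X]
    [NormedAddCommGroup Y] [NormedSpace ℝ Y] (T : X →L[ℝ] Y) (n : ℕ) : Prop :=
  FiniteDimensional ℝ (LinearMap.range (T : X →ₗ[ℝ] Y)) ∧
    Module.finrank ℝ (LinearMap.range (T : X →ₗ[ℝ] Y)) ≤ n

/-- The average of `‖∑ k, ε k • x k‖²` over all `2^n` sign choices `ε ∈ {-1,1}^n`. -/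
def radAvg {X : Type*} [NormedAddCommGroup X] [NormedSpace ℝ X] {n : ℕ}
    (x : Fin n → X) : ℝ :=
  (∑ ε : Fin n → Bool, ‖∑ k, (if ε k then (1 : ℝ) else -1) • x k‖ ^ 2) / 2 ^ n

/-- The Rademacher cotype `q` constant of `T` with respect to `n` vectors. -/
def cotypeN (q : ℝ) {X Y : Type*} [NormedAddCommGroup X] [NormedSpace ℝ X]
    [NormedAddCommGroup Y] [NormedSpace ℝ Y] (n : ℕ) (T : X →L[ℝ] Y) : ℝ≥0∞ :=
  ⨆ x : {x : Fin n → X // Real.sqrt (radAvg x) ≤ 1},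
    (∑ k, ENNReal.ofReal ‖T (x.1 k)‖ ^ q) ^ (1 / q)

/-- The Rademacher cotype `q` constant of `T`. -/
def cotype (q : ℝ) {X Y : Type*} [NormedAddCommGroup X] [NormedSpace ℝ X]
    [NormedAddCommGroup Y] [NormedSpace ℝ Y] (T : X →L[ℝ] Y) : ℝ≥0∞ :=
  ⨆ n : ℕ, cotypeN q n T


def sg (b : Bool) : ℝ := if b then 1 else -1

lemma sg_sq (b : Bool) : sg b * sg b = 1 := by cases b <;> simp [sg]

lemma sg_not (b : Bool) : sg (!b) = - sg b := by cases b <;> simp [sg]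

/-- Rademacher average for a general finite index type. -/
def rad {ι : Type*} [Fintype ι] [DecidableEq ι] {X : Type*} [NormedAddCommGroup X]
    [NormedSpace ℝ X] (x : ι → X) : ℝ :=
  (∑ ε : ι → Bool, ‖∑ k, sg (ε k) • x k‖ ^ 2) / 2 ^ Fintype.card ι

section radlemmas
variable {ι κ : Type*} [Fintype ι] [DecidableEq ι] [Fintype κ] [DecidableEq κ]
  {X : Type*} [NormedAddCommGroup X] [NormedSpace ℝ X]

lemma radAvg_eq_rad {n : ℕ} (x : Fin n → X) : radAvg x = rad x := by
  simp [radAvg, rad, sg]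

lemma rad_nonneg (x : ι → X) : 0 ≤ rad x := by unfold rad; positivity

lemma rad_smul (c : ℝ) (x : ι → X) : rad (fun k => c • x k) = c ^ 2 * rad x := by
  unfold rad
  rw [← mul_div_assoc, Finset.mul_sum]
  congr 1
  refine Finset.sum_congr rfl fun ε _ => ?_
  have : ∑ k, sg (ε k) • c • x k = c • ∑ k, sg (ε k) • x k := by
    rw [Finset.smul_sum]
    exact Finset.sum_congr rfl fun k _ => smul_comm _ _ _
  rw [this, norm_smul, mul_pow, Real.norm_eq_abs, sq_abs]

lemma norm_add_sq_le2 (a b : X) : ‖a + b‖ ^ 2 ≤ 2 * ‖a‖ ^ 2 + 2 * ‖b‖ ^ 2 := by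
  have h := norm_add_le a b
  have h0 := norm_nonneg (a + b)
  nlinarith [sq_nonneg (‖a‖ - ‖b‖)]

lemma rad_add_le (x y : ι → X) : rad (fun k => x k + y k) ≤ 2 * rad x + 2 * rad y := by
  unfold rad
  rw [← mul_div_assoc, ← mul_div_assoc, ← add_div, Finset.mul_sum, Finset.mul_sum,
    ← Finset.sum_add_distrib]
  gcongr with ε _
  simp only [smul_add, Finset.sum_add_distrib]
  exact norm_add_sq_le2 _ _

lemma convexOn_normsq : ConvexOn ℝ Set.univ (fun z : X => ‖z‖ ^ 2) :=
  (convexOn_univ_norm (E := X)).pow (fun _ _ => norm_nonneg _) 2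

lemma rad_sign (σ : ι → Bool) (x : ι → X) : rad (fun k => sg (σ k) • x k) = rad x := by
  unfold rad
  congr 1
  let e : (ι → Bool) ≃ (ι → Bool) :=
    { toFun := fun ε k => (ε k == σ k)
      invFun := fun ε k => (ε k == σ k)
      left_inv := fun ε => by
        ext k; show ((ε k == σ k) == σ k) = ε k
        cases ε k <;> cases σ k <;> rfl
      right_inv := fun ε => by
        ext k; show ((ε k == σ k) == σ k) = ε k
        cases ε k <;> cases σ k <;> rfl }
  refine Fintype.sum_equiv e _ _ fun ε => ?_
  congr 2
  refine Finset.sum_congr rfl fun k _ => ?_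
  rw [smul_smul]
  congr 1
  simp only [e, Equiv.coe_fn_mk]
  cases ε k <;> cases σ k <;> simp [sg]

lemma convexOn_rad (x : ι → X) : ConvexOn ℝ Set.univ (fun c : ι → ℝ => rad (fun k => c k • x k)) := by
  refine ⟨convex_univ, fun c _ d _ a b ha hb hab => ?_⟩
  simp only [rad, smul_eq_mul]
  rw [← mul_div_assoc, ← mul_div_assoc, ← add_div, Finset.mul_sum, Finset.mul_sum,
    ← Finset.sum_add_distrib]
  gcongr with ε _
  have := (convexOn_normsq (X := X)).2 (Set.mem_univ (∑ k, sg (ε k) • c k • x k))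
    (Set.mem_univ (∑ k, sg (ε k) • d k • x k)) ha hb hab
  refine le_trans (le_of_eq ?_) this
  congr 2
  rw [Finset.smul_sum, Finset.smul_sum, ← Finset.sum_add_distrib]
  refine Finset.sum_congr rfl fun k _ => ?_
  simp only [Pi.add_apply, Pi.smul_apply, smul_eq_mul, smul_smul, ← add_smul]
  congr 1; ring

lemma rad_contr (c : ι → ℝ) (hc : ∀ k, |c k| ≤ 1) (x : ι → X) :
    rad (fun k => c k • x k) ≤ rad x := by
  have hmem : c ∈ convexHull ℝ (Set.univ.pi fun _ : ι => ({-1, 1} : Set ℝ)) := by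
    rw [convexHull_pi]
    intro k _
    rw [convexHull_pair, segment_eq_Icc (by norm_num)]
    exact abs_le.1 (hc k)
  obtain ⟨y, hy, h⟩ := (convexOn_rad x).exists_ge_of_mem_convexHull (Set.subset_univ _) hmem
  refine h.trans (le_of_eq ?_)
  have : ∀ k, ∃ b : Bool, y k = sg b := by
    intro k
    rcases hy k (Set.mem_univ _) with h | h
    · exact ⟨false, by simpa [sg] using h⟩
    · exact ⟨true, by simpa [sg] using h⟩
  choose σ hσ using this
  simp only [hσ]
  exact rad_sign σ x

lemma rad_contr' (t : ℝ) (ht : 0 < t) (c : ι → ℝ) (hc : ∀ k, |c k| ≤ t) (x : ι → X) :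
    rad (fun k => c k • x k) ≤ t ^ 2 * rad x := by
  rw [← rad_smul]
  have := rad_contr (fun k => c k / t) (fun k => by
    rw [abs_div, abs_of_pos ht, div_le_one ht]; exact hc k) (fun k => t • x k)
  refine le_trans (le_of_eq ?_) this
  congr 1; ext k
  rw [smul_smul, div_mul_cancel₀ _ ht.ne']

lemma rad_equiv (e : ι ≃ κ) (x : κ → X) : rad (fun k => x (e k)) = rad x := by
  unfold rad
  rw [Fintype.card_congr e]
  congr 1
  refine Fintype.sum_equiv (Equiv.arrowCongr e (Equiv.refl Bool)) _ _ fun ε => ?_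
  congr 2
  refine Fintype.sum_equiv e _ _ fun k => ?_
  simp

lemma rad_sum_zero (x : ι → X) : rad (Sum.elim x (fun _ : κ => (0 : X))) = rad x := by
  unfold rad
  rw [Fintype.card_sum, pow_add]
  rw [Fintype.sum_equiv (Equiv.sumArrowEquivProdArrow ι κ Bool) _
    (fun p : (ι → Bool) × (κ → Bool) => ‖∑ k, sg (p.1 k) • x k‖ ^ 2)
    (fun ε => by simp [Equiv.sumArrowEquivProdArrow])]
  rw [Fintype.sum_prod_type]
  simp only [Finset.sum_const, Finset.card_univ, Fintype.card_fun, Fintype.card_bool, nsmul_eq_mul]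
  rw [← Finset.mul_sum]
  push_cast
  field_simp

/-- Subfamily padded with zeros. -/
lemma exists_pad (x : ι → X) (B : Finset ι) (m : ℕ) (hB : B.card ≤ m) :
    ∃ y : Fin m → X, radAvg y ≤ rad x ∧
      ∀ φ : ℝ → ℝ, φ 0 = 0 → ∑ k, φ ‖y k‖ = ∑ k ∈ B, φ ‖x k‖ := by
  have hc : Fintype.card (B ⊕ Fin (m - B.card)) = Fintype.card (Fin m) := by
    simp; omega
  let e := Fintype.equivOfCardEq hc
  let z : B ⊕ Fin (m - B.card) → X := Sum.elim (fun k : B => x k) (fun _ => 0)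
  refine ⟨fun k => z (e.symm k), ?_, ?_⟩
  · rw [radAvg_eq_rad, rad_equiv, rad_sum_zero]
    let e' : (B ⊕ {k // k ∉ B}) ≃ ι := Equiv.sumCompl (fun k => k ∈ B)
    have h1 := rad_contr (fun k => if k ∈ B then (1 : ℝ) else 0)
      (fun k => by split_ifs <;> simp) x
    rw [← rad_equiv e'] at h1
    refine le_trans (le_of_eq ?_) h1
    rw [← rad_sum_zero (κ := {k // k ∉ B}) (fun k : B => x k)]
    congr 1
    ext k
    rcases k with k | k
    · simp [e']
    · have := k.2
      simp [e', this]
  · intro φ h0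
    rw [Equiv.sum_comp e.symm (fun k => φ ‖z k‖)]
    simp [z, h0, Finset.sum_attach B (fun k => φ ‖x k‖)]

lemma sg_sum_orth (k l : ι) (h : k ≠ l) : ∑ ε : ι → Bool, sg (ε k) * sg (ε l) = 0 := by
  have := Fintype.sum_equiv (Equiv.piCongrRight fun i : ι => if i = k then Equiv.boolNot else Equiv.refl Bool)
    (fun ε : ι → Bool => - (sg (ε k) * sg (ε l))) (fun ε => sg (ε k) * sg (ε l)) (fun ε => by
      simp [h.symm, sg_not])
  rw [Finset.sum_neg_distrib] at this
  linarith

lemma rad_real (c : ι → ℝ) : (∑ ε : ι → Bool, (∑ k, sg (ε k) * c k) ^ 2) / 2 ^ Fintype.card ι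
    = ∑ k, c k ^ 2 := by
  rw [div_eq_iff (by positivity)]
  simp_rw [sq, Finset.sum_mul_sum]
  rw [Finset.sum_comm, Finset.sum_mul]
  refine Finset.sum_congr rfl fun k _ => ?_
  rw [Finset.sum_comm, Finset.sum_eq_single k]
  · have : ∀ ε : ι → Bool, sg (ε k) * c k * (sg (ε k) * c k) = c k * c k := fun ε => by
      linear_combination (c k * c k) * sg_sq (ε k)
    simp only [this, Finset.sum_const, Finset.card_univ, Fintype.card_fun, Fintype.card_bool,
      nsmul_eq_mul]
    push_cast; ring
  · intro l _ hl
    have : ∀ ε : ι → Bool, sg (ε k) * c k * (sg (ε l) * c l) = (c k * c l) * (sg (ε k) * sg (ε l)) :=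
      fun ε => by ring
    simp only [this]
    rw [← Finset.mul_sum, sg_sum_orth k l hl.symm, mul_zero]
  · simp

lemma sum_sq_functional_le (f : X →ₗ[ℝ] ℝ) (hf : ∀ z, |f z| ≤ ‖z‖) (x : ι → X) :
    ∑ k, f (x k) ^ 2 ≤ rad x := by
  rw [← rad_real]
  unfold rad
  refine div_le_div_of_nonneg_right (Finset.sum_le_sum fun ε _ => ?_) (by positivity)
  have := hf (∑ k, sg (ε k) • x k)
  rw [map_sum] at this
  simp only [map_smul, smul_eq_mul] at this
  rw [← sq_abs]
  gcongr

end radlemmas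

/-- Auerbach basis. -/
lemma auerbach (E : Type*) [NormedAddCommGroup E] [NormedSpace ℝ E] [FiniteDimensional ℝ E]
    (n : ℕ) (hn : Module.finrank ℝ E = n) :
    ∃ (e : Fin n → E) (f : Fin n → E →ₗ[ℝ] ℝ), (∀ i, ‖e i‖ ≤ 1) ∧ (∀ i z, |f i z| ≤ ‖z‖) ∧
      ∀ z, z = ∑ i, f i z • e i := by
  classical
  let b : Module.Basis (Fin n) ℝ E := (Module.finBasis ℝ E).reindex (finCongr hn)
  let K : Set (Fin n → E) := Set.univ.pi fun _ => Metric.closedBall (0 : E) 1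
  have : ProperSpace E := FiniteDimensional.proper ℝ E
  have hK : IsCompact K := isCompact_univ_pi fun _ => isCompact_closedBall _ _
  have hcont : Continuous (fun v : Fin n → E => |b.det v|) := by
    refine Continuous.abs ?_
    show Continuous (fun v : Fin n → E => b.det v)
    have : (fun v : Fin n → E => b.det v) = fun v => (Matrix.of fun i j => b.coord i (v j)).det := by
      ext v; rw [Module.Basis.det_apply]; rfl
    rw [this]
    refine Continuous.matrix_det ?_
    refine continuous_pi fun i => continuous_pi fun j => ?_
    exact (LinearMap.continuous_of_finiteDimensional (b.coord i)).comp (continuous_apply j)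
  obtain ⟨e, heK, hmax⟩ := hK.exists_isMaxOn ⟨0, by intro i _; simp⟩ hcont.continuousOn
  have he1 : ∀ i, ‖e i‖ ≤ 1 := fun i => by simpa using heK i (Set.mem_univ _)
  have hpos : 0 < |b.det e| := by
    -- normalised basis
    let v : Fin n → E := fun i => (‖b i‖⁻¹ : ℝ) • b i
    have hvK : v ∈ K := fun i _ => by
      simp only [v, mem_closedBall_zero_iff, norm_smul, norm_inv, norm_norm]
      rw [inv_mul_cancel₀ (norm_ne_zero_iff.2 (b.ne_zero i))]
    have h := hmax hvK
    refine lt_of_lt_of_le ?_ h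
    simp only [v]
    rw [abs_pos]
    have := b.det.map_smul_univ (fun i => (‖b i‖⁻¹ : ℝ)) b
    rw [this, b.det_self]
    simp only [smul_eq_mul, mul_one]
    exact Finset.prod_ne_zero_iff.2 fun i _ => inv_ne_zero (norm_ne_zero_iff.2 (b.ne_zero i))
  have hdet : b.det e ≠ 0 := abs_pos.1 hpos
  have hu : IsUnit (b.det e) := isUnit_iff_ne_zero.2 hdet
  obtain ⟨hli, hsp⟩ := (Module.Basis.is_basis_iff_det b).2 hu
  let B : Module.Basis (Fin n) ℝ E := Module.Basis.mk hli hsp.ge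
  have hBe : ∀ i, B i = e i := fun i => Module.Basis.mk_apply _ _ i
  refine ⟨e, fun i => B.coord i, he1, ?_, fun z => ?_⟩
  · intro i z
    -- on the unit ball
    have key : ∀ z : E, ‖z‖ ≤ 1 → |B.coord i z| ≤ 1 := by
      intro z hz
      have hmem : Function.update e i z ∈ K := by
        intro j _
        by_cases hj : j = i
        · subst hj; simpa using hz
        · simpa [hj] using he1 j
      have h := hmax hmem
      have hz' : z = ∑ j, B.coord j z • e j := by
        conv_lhs => rw [← B.sum_repr z]
        simp [hBe]
      have : b.det (Function.update e i z) = B.coord i z * b.det e := by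
        conv_lhs => rw [hz']
        rw [b.det.map_update_sum]
        rw [Finset.sum_eq_single i]
        · rw [b.det.map_update_smul, Function.update_eq_self]; rfl
        · intro j _ hj
          rw [b.det.map_update_smul, b.det.map_update_self e hj.symm, smul_zero]
        · simp
      have h2 : |b.det (Function.update e i z)| ≤ |b.det e| := h
      rw [this, abs_mul] at h2
      exact le_of_mul_le_mul_right (by linarith) hpos
    by_cases hz : z = 0
    · simp [hz]
    · have hz0 : 0 < ‖z‖ := norm_pos_iff.2 hz
      have := key (‖z‖⁻¹ • z) (by rw [norm_smul, norm_inv, norm_norm, inv_mul_cancel₀ hz0.ne'])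
      rw [map_smul, smul_eq_mul, abs_mul, abs_inv, abs_norm] at this
      rwa [inv_mul_le_iff₀ hz0, mul_one] at this
  · conv_lhs => rw [← B.sum_repr z]
    simp [hBe]

section bounds
variable {ι : Type*} [Fintype ι] [DecidableEq ι]
  {E : Type*} [NormedAddCommGroup E] [NormedSpace ℝ E] [FiniteDimensional ℝ E]

lemma norm_sq_le_coords {n : ℕ} (e : Fin n → E) (f : Fin n → E →ₗ[ℝ] ℝ) (he : ∀ i, ‖e i‖ ≤ 1)
    (hz : ∀ z, z = ∑ i, f i z • e i) (z : E) : ‖z‖ ^ 2 ≤ n * ∑ i, f i z ^ 2 := by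
  have h1 : ‖z‖ ≤ ∑ i, |f i z| := by
    conv_lhs => rw [hz z]
    refine (norm_sum_le _ _).trans (Finset.sum_le_sum fun i _ => ?_)
    rw [norm_smul, Real.norm_eq_abs]
    exact mul_le_of_le_one_right (abs_nonneg _) (he i)
  calc ‖z‖ ^ 2 ≤ (∑ i, |f i z|) ^ 2 := by gcongr
    _ ≤ (Finset.univ : Finset (Fin n)).card * ∑ i, |f i z| ^ 2 := sq_sum_le_card_mul_sum_sq
    _ = _ := by simp

lemma cotype_poly (n : ℕ) (hn : Module.finrank ℝ E = n) (x : ι → E) :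
    ∑ k, ‖x k‖ ^ 2 ≤ (n : ℝ) ^ 2 * rad x := by
  obtain ⟨e, f, he, hf, hz⟩ := auerbach E n hn
  calc ∑ k, ‖x k‖ ^ 2 ≤ ∑ k, n * ∑ i, f i (x k) ^ 2 :=
        Finset.sum_le_sum fun k _ => norm_sq_le_coords e f he hz _
    _ = n * ∑ i, ∑ k, f i (x k) ^ 2 := by rw [← Finset.mul_sum, Finset.sum_comm]
    _ ≤ n * ∑ i : Fin n, rad x := by
        gcongr with i _
        exact sum_sq_functional_le (f i) (hf i) x
    _ = _ := by simp; ring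

lemma type_poly (n : ℕ) (hn : Module.finrank ℝ E = n) (x : ι → E) :
    rad x ≤ (n : ℝ) ^ 2 * ∑ k, ‖x k‖ ^ 2 := by
  obtain ⟨e, f, he, hf, hz⟩ := auerbach E n hn
  calc rad x ≤ (∑ ε : ι → Bool, n * ∑ i, (∑ k, sg (ε k) * f i (x k)) ^ 2) / 2 ^ Fintype.card ι := by
        unfold rad
        gcongr with ε _
        refine (norm_sq_le_coords e f he hz _).trans (le_of_eq ?_)
        simp [map_sum]
    _ = n * ∑ i, ∑ k, f i (x k) ^ 2 := by
        rw [← Finset.mul_sum, Finset.sum_comm, mul_div_assoc, Finset.sum_div]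
        congr 1
        exact Finset.sum_congr rfl fun i _ => rad_real _
    _ ≤ n * ∑ i : Fin n, ∑ k, ‖x k‖ ^ 2 := by
        refine mul_le_mul_of_nonneg_left (Finset.sum_le_sum fun i _ => Finset.sum_le_sum fun k _ => ?_)
          (Nat.cast_nonneg _)
        rw [← sq_abs]
        gcongr
        exact hf i (x k)
    _ = _ := by simp; ring

end bounds

section bss
open Matrix
variable {ι : Type*} [Fintype ι] [DecidableEq ι]

lemma posDef_dot {C : Matrix ι ι ℝ} (hC : C.PosDef) {z : ι → ℝ} (hz : z ≠ 0) :
    0 < z ⬝ᵥ C *ᵥ z := by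
  simpa using hC.dotProduct_mulVec_pos hz

lemma posSemidef_dot {C : Matrix ι ι ℝ} (hC : C.PosSemidef) (z : ι → ℝ) :
    0 ≤ z ⬝ᵥ C *ᵥ z := by
  simpa using hC.dotProduct_mulVec_nonneg z

lemma sym_dot {C : Matrix ι ι ℝ} (hC : Cᵀ = C) (z w : ι → ℝ) :
    z ⬝ᵥ C *ᵥ w = (C *ᵥ z) ⬝ᵥ w := by
  rw [dotProduct_mulVec, ← mulVec_transpose, hC]

lemma posDef_transpose {C : Matrix ι ι ℝ} (hC : C.PosDef) : Cᵀ = C := by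
  have := hC.isHermitian
  rw [Matrix.IsHermitian, conjTranspose_eq_transpose_of_trivial] at this
  exact this

lemma trace_frame {N : ℕ} (v : Fin N → ι → ℝ) (hv : ∑ k, vecMulVec (v k) (v k) = 1)
    (M : Matrix ι ι ℝ) : ∑ k, v k ⬝ᵥ M *ᵥ v k = M.trace := by
  calc ∑ k, v k ⬝ᵥ M *ᵥ v k = ∑ k, (M * vecMulVec (v k) (v k)).trace := by
        refine Finset.sum_congr rfl fun k _ => ?_
        rw [mul_vecMulVec, trace_vecMulVec, dotProduct_comm]
    _ = (M * ∑ k, vecMulVec (v k) (v k)).trace := by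
        rw [Finset.mul_sum, trace_sum]
    _ = M.trace := by rw [hv, mul_one]

lemma cs_posDef {C : Matrix ι ι ℝ} (hC : C.PosDef) (v z : ι → ℝ) :
    (v ⬝ᵥ z) ^ 2 ≤ (v ⬝ᵥ C⁻¹ *ᵥ v) * (z ⬝ᵥ C *ᵥ z) := by
  have hT := posDef_transpose hC
  have hdet : IsUnit C.det := (isUnit_iff_isUnit_det _).1 hC.isUnit
  have hCC : C *ᵥ (C⁻¹ *ᵥ v) = v := by
    rw [mulVec_mulVec, mul_nonsing_inv _ hdet, one_mulVec]
  set β := v ⬝ᵥ C⁻¹ *ᵥ v with hβ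
  have hq : ∀ s : ℝ, 0 ≤ z ⬝ᵥ C *ᵥ z - 2 * s * (v ⬝ᵥ z) + s ^ 2 * β := by
    intro s
    have h := posSemidef_dot hC.posSemidef (z - s • (C⁻¹ *ᵥ v))
    refine le_of_le_of_eq h ?_
    rw [mulVec_sub, mulVec_smul, hCC, sub_dotProduct, dotProduct_sub, dotProduct_sub,
      smul_dotProduct, smul_dotProduct, dotProduct_smul, dotProduct_smul, sym_dot hT, 
      sym_dot hT (C⁻¹ *ᵥ v) z, hCC, dotProduct_comm z v, dotProduct_comm (C⁻¹ *ᵥ v) v, ← hβ]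
    simp only [smul_eq_mul]
    ring
  by_cases hv : v = 0
  · subst hv; simp [hβ]
  have hβ0 : 0 < β := posDef_dot hC.inv hv
  have h := hq ((v ⬝ᵥ z) / β)
  have : z ⬝ᵥ C *ᵥ z - 2 * ((v ⬝ᵥ z) / β) * (v ⬝ᵥ z) + ((v ⬝ᵥ z) / β) ^ 2 * β
      = z ⬝ᵥ C *ᵥ z - (v ⬝ᵥ z) ^ 2 / β := by field_simp; ring
  rw [this, sub_nonneg, div_le_iff₀ hβ0] at h
  linarith

lemma bss_step [Nonempty ι] {N : ℕ} (v : Fin N → ι → ℝ) (hv : ∑ k, vecMulVec (v k) (v k) = 1)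
    (a : Fin N → ℝ) (ha : ∀ k, v k = 0 → a k = 0) (hpos : 0 < ∑ k, a k)
    (B : Matrix ι ι ℝ) (hB : B.PosDef) (hΦ : (B⁻¹).trace ≤ 1) :
    ∃ k, ∃ t : ℝ, 0 ≤ t ∧ (∑ k, a k) / 2 ≤ t * a k ∧
      (B + 1 - t • vecMulVec (v k) (v k)).PosDef ∧
      ((B + 1 - t • vecMulVec (v k) (v k))⁻¹).trace ≤ 1 := by
  set C := B + 1 with hC'
  have hC : C.PosDef := hB.add PosDef.one
  set M := C⁻¹ with hM'
  have hM : M.PosDef := hC.inv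
  have hMT := posDef_transpose hM
  have hdB : IsUnit B.det := (isUnit_iff_isUnit_det _).1 hB.isUnit
  have hdC : IsUnit C.det := (isUnit_iff_isUnit_det _).1 hC.isUnit
  have hCM : C * M = 1 := mul_nonsing_inv _ hdC
  have hMC : M * C = 1 := nonsing_inv_mul _ hdC
  have hBB : B * B⁻¹ = 1 := mul_nonsing_inv _ hdB
  have h1 : B⁻¹ = M + M * B⁻¹ := by
    have : M * C * B⁻¹ = M * (B * B⁻¹) + M * B⁻¹ := by rw [hC']; noncomm_ring
    rw [hMC, hBB, one_mul, mul_one] at this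
    exact this
  have h2 : B⁻¹ = M + M * M + M * (M * B⁻¹) := by
    conv_lhs => rw [h1, h1]
    noncomm_ring
  have h3 : 0 ≤ (M * (M * B⁻¹)).trace := by
    rw [← mul_assoc, trace_mul_comm, ← mul_assoc, trace_mul_comm]
    have : (M * B⁻¹ * Mᴴ).PosSemidef := hB.inv.posSemidef.mul_mul_conjTranspose_same M
    rw [conjTranspose_eq_transpose_of_trivial, hMT] at this
    rw [mul_assoc] at this
    exact this.trace_nonneg
  set Δ := (B⁻¹).trace - M.trace with hΔ
  have hΔM : (M * M).trace ≤ Δ := by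
    have := congrArg trace h2
    rw [trace_add, trace_add] at this
    linarith
  have hMM : ∀ w : ι → ℝ, w ⬝ᵥ (M * M) *ᵥ w = (M *ᵥ w) ⬝ᵥ (M *ᵥ w) := fun w => by
    rw [← mulVec_mulVec, sym_dot hMT]
  have hMM0 : ∀ w : ι → ℝ, w ≠ 0 → 0 < w ⬝ᵥ (M * M) *ᵥ w := fun w hw => by
    rw [hMM]
    have hne : M *ᵥ w ≠ 0 := fun h0 => hw (by
      have : C *ᵥ (M *ᵥ w) = w := by rw [mulVec_mulVec, hCM, one_mulVec]
      rw [← this, h0, mulVec_zero])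
    have h : 0 ≤ (M *ᵥ w) ⬝ᵥ (M *ᵥ w) := Finset.sum_nonneg fun i _ => mul_self_nonneg _
    exact lt_of_le_of_ne h fun h0 => hne (dotProduct_self_eq_zero.1 h0.symm)
  have hex : ∃ k, v k ≠ 0 := by
    by_contra h
    push Not at h
    have : ∑ k, a k = 0 := Finset.sum_eq_zero fun k _ => ha k (h k)
    linarith
  have htrMM : 0 < (M * M).trace := by
    rw [← trace_frame v hv]
    obtain ⟨k, hk⟩ := hex
    refine Finset.sum_pos' (fun j _ => ?_) ⟨k, Finset.mem_univ _, hMM0 _ hk⟩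
    by_cases hj : v j = 0
    · simp [hj]
    · exact (hMM0 _ hj).le
  have hΔ0 : 0 < Δ := htrMM.trans_le hΔM
  set U : Fin N → ℝ := fun k => (v k ⬝ᵥ (M * M) *ᵥ v k) / Δ + v k ⬝ᵥ M *ᵥ v k with hU
  have hU0 : ∀ k, v k ≠ 0 → 0 < U k := fun k hk =>
    add_pos (div_pos (hMM0 _ hk) hΔ0) (posDef_dot hM hk)
  have hUs : ∑ k, U k ≤ 2 := by
    simp only [hU]
    rw [Finset.sum_add_distrib, ← Finset.sum_div, trace_frame v hv, trace_frame v hv]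
    have : (M * M).trace / Δ ≤ 1 := (div_le_one hΔ0).2 hΔM
    linarith
  obtain ⟨k, hk, hak⟩ : ∃ k, v k ≠ 0 ∧ (∑ k, a k) / 2 * U k ≤ a k := by
    by_contra h
    push Not at h
    have hlt : ∑ k, a k < ∑ k, (∑ k, a k) / 2 * U k := by
      obtain ⟨k, hk⟩ := hex
      refine Finset.sum_lt_sum (fun j _ => ?_) ⟨k, Finset.mem_univ _, h k hk⟩
      by_cases hj : v j = 0
      · simp [hU, hj, ha j hj]
      · exact (h j hj).le
    rw [← Finset.mul_sum] at hlt
    nlinarith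
  refine ⟨k, 1 / U k, (one_div_pos.2 (hU0 k hk)).le, ?_, ?_⟩
  · rw [one_div, ← div_eq_inv_mul, le_div_iff₀ (hU0 k hk)]; exact hak
  set t := 1 / U k with ht
  have ht0 : 0 < t := one_div_pos.2 (hU0 k hk)
  set α := v k ⬝ᵥ (M * M) *ᵥ v k with hα
  set β := v k ⬝ᵥ M *ᵥ v k with hβ
  have hα0 : 0 < α := hMM0 _ hk
  have htU : t * (α / Δ + β) = 1 := by
    have : U k = α / Δ + β := rfl
    rw [← this, ht]; exact one_div_mul_cancel (hU0 k hk).ne'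
  have h1t : 0 < 1 - t * β := by
    have : 1 - t * β = t * (α / Δ) := by linarith
    rw [this]; positivity
  have htα : t * α = Δ * (1 - t * β) := by
    have : 1 - t * β = t * (α / Δ) := by linarith
    rw [this]; field_simp
  set c := t / (1 - t * β) with hc
  set w := M *ᵥ v k with hw
  have hCw : C *ᵥ w = v k := by rw [hw, mulVec_mulVec, hCM, one_mulVec]
  have hinv : (C - t • vecMulVec (v k) (v k)) * (M + c • vecMulVec w w) = 1 := by
    rw [sub_mul, mul_add, mul_add, hCM, mul_smul_comm, mul_vecMulVec, hCw, smul_mul_assoc,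
      smul_mul_assoc, mul_smul_comm, vecMulVec_mul, vecMulVec_mul_vecMulVec,
      ← mulVec_transpose, hMT, ← hw, ← hβ]
    have hcc : c - t - t * c * β = 0 := by
      rw [hc]; field_simp; ring
    have : (1 : Matrix ι ι ℝ) + c • vecMulVec (v k) w - (t • vecMulVec (v k) w + t • c • vecMulVec (v k) (β • w))
      = 1 + (c - t - t * c * β) • vecMulVec (v k) w := by
      rw [vecMulVec_smul]
      module
    rw [this, hcc, zero_smul, add_zero]
  constructor
  · refine PosDef.of_dotProduct_mulVec_pos ?_ fun z hz => ?_
    · rw [Matrix.IsHermitian, conjTranspose_eq_transpose_of_trivial, transpose_sub, transpose_smul,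
        transpose_vecMulVec, posDef_transpose hC]
    · simp only [star_trivial]
      rw [sub_mulVec, smul_mulVec, dotProduct_sub, dotProduct_smul, vecMulVec_mulVec]
      have hcs := cs_posDef hC (v k) z
      rw [← hM', ← hβ] at hcs
      have hz0 := posDef_dot hC hz
      have : z ⬝ᵥ (MulOpposite.op (v k ⬝ᵥ z) • v k) = (v k ⬝ᵥ z) ^ 2 := by
        rw [op_smul_eq_smul, dotProduct_smul, dotProduct_comm z, smul_eq_mul, sq]
      rw [this, smul_eq_mul]
      nlinarith [mul_le_mul_of_nonneg_left hcs ht0.le, mul_pos h1t hz0]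
  · rw [inv_eq_right_inv hinv, trace_add, trace_smul, trace_vecMulVec, smul_eq_mul]
    have : w ⬝ᵥ w = α := by rw [hα, hMM]
    rw [this, hc, div_mul_eq_mul_div, htα, mul_div_assoc, div_self h1t.ne', mul_one]
    linarith

lemma bss {N : ℕ} (v : Fin N → ι → ℝ) (hv : ∑ k, vecMulVec (v k) (v k) = 1)
    (a : Fin N → ℝ) (ha : ∀ k, v k = 0 → a k = 0) (hpos : 0 < ∑ k, a k) :
    ∃ (idx : Fin (Fintype.card ι) → Fin N) (s : Fin (Fintype.card ι) → ℝ),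
      (∀ i, 0 ≤ s i) ∧ (∀ z : ι → ℝ, ∑ i, s i * (v (idx i) ⬝ᵥ z) ^ 2 ≤ z ⬝ᵥ z) ∧
      (∑ k, a k) / 4 ≤ ∑ i, s i * a (idx i) := by
  have hne : Nonempty ι := by
    by_contra h
    rw [not_nonempty_iff] at h
    have : ∑ k, a k = 0 := Finset.sum_eq_zero fun k _ => ha k (Subsingleton.elim _ _)
    linarith
  set r := Fintype.card ι with hr
  have hr0 : (0 : ℝ) < r := by exact_mod_cast Fintype.card_pos
  have main : ∀ j : ℕ, ∃ (idx : Fin j → Fin N) (t : Fin j → ℝ), (∀ i, 0 ≤ t i) ∧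
      ((r + j : ℝ) • (1 : Matrix ι ι ℝ) - ∑ i, t i • vecMulVec (v (idx i)) (v (idx i))).PosDef ∧
      (((r + j : ℝ) • (1 : Matrix ι ι ℝ) - ∑ i, t i • vecMulVec (v (idx i)) (v (idx i)))⁻¹).trace ≤ 1 ∧
      j * ((∑ k, a k) / 2) ≤ ∑ i, t i * a (idx i) := by
    intro j
    induction j with
    | zero =>
      refine ⟨Fin.elim0, Fin.elim0, fun i => i.elim0, ?_, ?_, by simp⟩
      · simp only [Finset.univ_eq_empty, Finset.sum_empty, sub_zero, Nat.cast_zero, add_zero]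
        exact PosDef.one.smul hr0
      · simp only [Finset.univ_eq_empty, Finset.sum_empty, sub_zero, Nat.cast_zero, add_zero]
        have : ((r : ℝ) • (1 : Matrix ι ι ℝ))⁻¹ = (r : ℝ)⁻¹ • 1 := by
          apply inv_eq_right_inv
          rw [smul_mul_smul_comm, mul_inv_cancel₀ hr0.ne', one_mul, one_smul]
        rw [this, trace_smul, trace_one, smul_eq_mul, ← hr, inv_mul_cancel₀ hr0.ne']
    | succ j ih =>
      obtain ⟨idx, t, ht, hP, hT, hs⟩ := ih
      obtain ⟨k, τ, hτ, hg, hP', hT'⟩ := bss_step v hv a ha hpos _ hP hT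
      have heq : ((r + (j + 1 : ℕ) : ℝ) • (1 : Matrix ι ι ℝ) - ∑ i, (Fin.snoc t τ : Fin (j+1) → ℝ) i •
          vecMulVec (v ((Fin.snoc idx k : Fin (j+1) → Fin N) i)) (v ((Fin.snoc idx k : Fin (j+1) → Fin N) i)))
          = (r + j : ℝ) • (1 : Matrix ι ι ℝ) - ∑ i, t i • vecMulVec (v (idx i)) (v (idx i)) + 1
            - τ • vecMulVec (v k) (v k) := by
        rw [Fin.sum_univ_castSucc]
        simp only [Fin.snoc_castSucc, Fin.snoc_last]
        push_cast
        module
      refine ⟨Fin.snoc idx k, Fin.snoc t τ, ?_, ?_, ?_, ?_⟩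
      · intro i
        refine Fin.lastCases ?_ (fun i => ?_) i
        · simpa using hτ
        · simpa using ht i
      · rw [heq]; exact hP'
      · rw [heq]; exact hT'
      · rw [Fin.sum_univ_castSucc]
        simp only [Fin.snoc_castSucc, Fin.snoc_last]
        push_cast
        linarith
  obtain ⟨idx, t, ht, hP, -, hs⟩ := main r
  refine ⟨idx, fun i => t i / (2 * r), fun i => by have := ht i; positivity, fun z => ?_, ?_⟩
  · have h := posSemidef_dot hP.posSemidef z
    rw [sub_mulVec, smul_mulVec, one_mulVec, dotProduct_sub, dotProduct_smul, smul_eq_mul,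
      sum_mulVec, dotProduct_sum] at h
    have h' : ∀ i, z ⬝ᵥ (t i • vecMulVec (v (idx i)) (v (idx i))) *ᵥ z = t i * (v (idx i) ⬝ᵥ z) ^ 2 := by
      intro i
      rw [smul_mulVec, dotProduct_smul, vecMulVec_mulVec, op_smul_eq_smul, dotProduct_smul,
        dotProduct_comm z, smul_eq_mul, smul_eq_mul, sq]
    simp only [h'] at h
    have : ∑ i, t i / (2 * r) * (v (idx i) ⬝ᵥ z) ^ 2 = (∑ i, t i * (v (idx i) ⬝ᵥ z) ^ 2) / (2 * r) := by
      rw [Finset.sum_div]; exact Finset.sum_congr rfl fun i _ => by ring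
    rw [this, div_le_iff₀ (by positivity)]
    linarith
  · have : ∑ i, t i / (2 * r) * a (idx i) = (∑ i, t i * a (idx i)) / (2 * r) := by
      rw [Finset.sum_div]; exact Finset.sum_congr rfl fun i _ => by ring
    rw [this, le_div_iff₀ (by positivity)]
    linarith
end bss

section gauss
open MeasureTheory ProbabilityTheory Matrix WithLp

/-- The standard Gaussian product measure. -/
def gam (ι : Type*) [Fintype ι] : Measure (ι → ℝ) := Measure.pi fun _ : ι => gaussianReal 0 1

instance (ι : Type*) [Fintype ι] : IsProbabilityMeasure (gam ι) := by
  unfold gam; infer_instance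

section
variable {ι κ : Type*} [Fintype ι] [DecidableEq ι] [Fintype κ] [DecidableEq κ]

lemma charFun_gam (t : EuclideanSpace ℝ ι) :
    charFun ((gam ι).map (toLp 2)) t = Complex.exp (- (∑ k, t k ^ 2 : ℝ) / 2) := by
  unfold gam
  rw [charFun_pi]
  simp_rw [charFun_gaussianReal, ← Complex.exp_sum]
  congr 1
  push_cast
  simp [Finset.sum_div, neg_div]

lemma gam_map (Q : Matrix ι κ ℝ) (hQ : Q * Qᵀ = 1) :
    (gam κ).map (fun g => Q *ᵥ g) = gam ι := by
  have hmeas : Measurable (fun g : κ → ℝ => Q *ᵥ g) := by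
    refine measurable_pi_lambda _ fun i => ?_
    simp only [mulVec, dotProduct]
    fun_prop
  have key : ((gam κ).map (fun g => Q *ᵥ g)).map (toLp 2) = (gam ι).map (toLp 2 : (ι → ℝ) → EuclideanSpace ℝ ι) := by
    have : IsProbabilityMeasure ((gam κ).map (fun g => Q *ᵥ g)) :=
      Measure.isProbabilityMeasure_map hmeas.aemeasurable
    have h1 : IsProbabilityMeasure (((gam κ).map (fun g => Q *ᵥ g)).map (toLp 2 : (ι → ℝ) → EuclideanSpace ℝ ι)) :=
      Measure.isProbabilityMeasure_map (by fun_prop)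
    have h2 : IsProbabilityMeasure ((gam ι).map (toLp 2 : (ι → ℝ) → EuclideanSpace ℝ ι)) :=
      Measure.isProbabilityMeasure_map (by fun_prop)
    apply Measure.ext_of_charFun (E := EuclideanSpace ℝ ι)
    ext t
    rw [charFun_gam]
    have hs : ∑ k, t k ^ 2 = ∑ k, (toLp 2 (Qᵀ *ᵥ (ofLp t)) : EuclideanSpace ℝ κ) k ^ 2 := by
      have : (ofLp t) ⬝ᵥ (ofLp t) = (Qᵀ *ᵥ (ofLp t)) ⬝ᵥ (Qᵀ *ᵥ (ofLp t)) := by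
        rw [dotProduct_mulVec, ← mulVec_transpose, transpose_transpose, mulVec_mulVec, hQ,
          one_mulVec]
      simpa [dotProduct, sq] using this
    rw [hs, ← charFun_gam, charFun_apply, charFun_apply, Measure.map_map (by fun_prop) hmeas,
      integral_map (by fun_prop) (by fun_prop), integral_map (by fun_prop) (by fun_prop)]
    congr 1
    ext g
    congr 3
    simp only [Function.comp, EuclideanSpace.inner_eq_star_dotProduct, star_trivial]
    rw [dotProduct_mulVec, ← mulVec_transpose]
  have := congrArg (Measure.map (ofLp : EuclideanSpace ℝ ι → ι → ℝ)) key
  have hgen : ∀ μ : Measure (ι → ℝ), (μ.map (toLp 2 : (ι → ℝ) → EuclideanSpace ℝ ι)).map ofLp = μ := by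
    intro μ
    rw [Measure.map_map (by fun_prop) (by fun_prop)]
    have hid : (ofLp : EuclideanSpace ℝ ι → ι → ℝ) ∘ (toLp 2) = id := rfl
    rw [hid, Measure.map_id]
  rwa [hgen, hgen] at this

lemma gam_integral (Q : Matrix ι κ ℝ) (hQ : Q * Qᵀ = 1) (F : (ι → ℝ) → ℝ) (hF : Continuous F) :
    ∫ g, F (Q *ᵥ g) ∂(gam κ) = ∫ g, F g ∂(gam ι) := by
  rw [← gam_map Q hQ, integral_map]
  · refine Continuous.aemeasurable ?_
    fun_prop
  · exact hF.aestronglyMeasurable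

end

variable {ι κ : Type*} [Fintype ι] [DecidableEq ι] [Fintype κ] [DecidableEq κ]
variable {E : Type*} [NormedAddCommGroup E] [NormedSpace ℝ E]

lemma gam_eval (k : ι) : MeasurePreserving (fun g : ι → ℝ => g k) (gam ι) (gaussianReal 0 1) :=
  measurePreserving_eval _ k

lemma memLp_eval (k : ι) : MemLp (fun g : ι → ℝ => g k) 2 (gam ι) :=
  (memLp_id_gaussianReal' 2 (by simp)).comp_measurePreserving (gam_eval k)

lemma memLp_lin (x : ι → E) : MemLp (fun g : ι → ℝ => ∑ k, g k • x k) 2 (gam ι) := by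
  refine memLp_finsetSum _ fun k _ => ?_
  have h := (memLp_eval (ι := ι) k).norm.const_mul ‖x k‖
  refine MemLp.of_le h (Continuous.aestronglyMeasurable (by fun_prop)) (Filter.Eventually.of_forall fun g => ?_)
  simp [norm_smul, mul_comm]

lemma int_lin (x : ι → E) : Integrable (fun g : ι → ℝ => ‖∑ k, g k • x k‖ ^ 2) (gam ι) :=
  (memLp_two_iff_integrable_sq_norm (memLp_lin x).1).1 (memLp_lin x)

/-- Gaussian average. -/
def gav (x : ι → E) : ℝ := ∫ g, ‖∑ k, g k • x k‖ ^ 2 ∂(gam ι)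

lemma int_rad (x : ι → E) : Integrable (fun g : ι → ℝ => rad (fun k => g k • x k)) (gam ι) := by
  unfold rad
  refine Integrable.div_const (integrable_finsetSum _ fun ε _ => ?_) _
  have := int_lin (fun k => sg (ε k) • x k)
  refine this.congr (Filter.Eventually.of_forall fun g => ?_)
  simp only
  congr 3; ext k; rw [smul_comm]

lemma gav_eq_rad (x : ι → E) : gav x = ∫ g, rad (fun k => g k • x k) ∂(gam ι) := by
  unfold rad
  rw [integral_div, integral_finsetSum]
  · have : ∀ ε : ι → Bool, ∫ g, ‖∑ k, sg (ε k) • g k • x k‖ ^ 2 ∂(gam ι) = gav x := by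
      intro ε
      have h := gam_integral (Matrix.diagonal fun k => sg (ε k)) (by
        rw [diagonal_transpose, diagonal_mul_diagonal]
        simp [sg_sq]) (fun g : ι → ℝ => ‖∑ k, g k • x k‖ ^ 2) (by fun_prop)
      unfold gav
      rw [← h]
      congr 1; ext g
      simp [mulVec_diagonal, smul_smul]
    simp only [this, Finset.sum_const, Finset.card_univ, Fintype.card_fun, Fintype.card_bool, nsmul_eq_mul]
    push_cast
    field_simp
  · intro ε _
    have := int_lin (fun k => sg (ε k) • x k)
    refine this.congr (Filter.Eventually.of_forall fun g => ?_)
    simp only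
    congr 3; ext k; rw [smul_comm]

/-- First absolute moment of the Gaussian. -/
def am : ℝ := ∫ s, |s| ∂(gaussianReal 0 1)

lemma int_abs : Integrable (fun s : ℝ => |s|) (gaussianReal 0 1) :=
  ((memLp_id_gaussianReal' (μ := 0) (v := 1) 1 (by simp)).integrable le_rfl).abs

lemma am_pos : 0 < am := by
  unfold am
  rw [integral_pos_iff_support_of_nonneg (fun s => abs_nonneg s) int_abs]
  have : Function.support (fun s : ℝ => |s|) = {0}ᶜ := by ext s; simp
  have hna : NullSingletonClass (gaussianReal 0 1) := nullSingletonClass_gaussianReal (by simp)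
  rw [this, prob_compl_eq_one_sub (measurableSet_singleton 0), measure_singleton]
  simp

lemma rad_abs_eq (c : ι → ℝ) (x : ι → E) :
    rad (fun k => |c k| • x k) = rad (fun k => c k • x k) := by
  have := rad_sign (fun k => decide (0 ≤ c k)) (fun k => c k • x k)
  rw [← this]
  congr 1; ext k
  rw [smul_smul]
  congr 1
  by_cases h : 0 ≤ c k
  · simp [sg, h, abs_of_nonneg h]
  · simp [sg, h, abs_of_neg (not_le.1 h)]

lemma rad_le_gav (x : ι → E) : am ^ 2 * rad x ≤ gav x := by
  rw [gav_eq_rad, ← rad_smul]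
  have hint : Integrable (fun g : ι → ℝ => (fun k => |g k|)) (gam ι) :=
    Integrable.of_eval fun k => ((memLp_eval k).integrable (by norm_num)).abs
  have hJ := (convexOn_rad x).map_integral_le (μ := gam ι) (f := fun g : ι → ℝ => (fun k => |g k|))
    (by unfold rad; fun_prop) isClosed_univ (by simp) hint (by
      refine (int_rad x).congr (Filter.Eventually.of_forall fun g => ?_)
      exact (rad_abs_eq g x).symm)
  have he : (∫ g, (fun k => |g k|) ∂(gam ι)) = fun _ : ι => am := by
    ext k
    rw [eval_integral (fun k => ((memLp_eval k).integrable (by norm_num)).abs)]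
    rw [am, ← (gam_eval k).map_eq, integral_map (gam_eval k).measurable.aemeasurable (continuous_abs.aestronglyMeasurable)]
  rw [he] at hJ
  refine hJ.trans (le_of_eq ?_)
  congr 1; ext g
  exact rad_abs_eq g x

/-- Gaussian covariance domination. -/
lemma gav_mono {N r : ℕ} (x : Fin N → E) (w : Fin r → Fin N → ℝ)
    (hw : ∀ z : Fin N → ℝ, ∑ j, (w j ⬝ᵥ z) ^ 2 ≤ z ⬝ᵥ z) :
    gav (fun j => ∑ k, w j k • x k) ≤ gav x := by
  let W : Matrix (Fin r) (Fin N) ℝ := Matrix.of w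
  have hps : (1 - Wᵀ * W).PosSemidef := by
    refine PosSemidef.of_dotProduct_mulVec_nonneg ?_ fun z => ?_
    · rw [Matrix.IsHermitian, conjTranspose_eq_transpose_of_trivial]
      simp
    · simp only [star_trivial]
      rw [sub_mulVec, one_mulVec, dotProduct_sub, ← mulVec_mulVec, dotProduct_mulVec,
        ← mulVec_transpose, transpose_transpose, sub_nonneg]
      refine le_trans (le_of_eq ?_) (hw z)
      simp only [dotProduct, mulVec, W, Matrix.of_apply, sq]
  obtain ⟨m, A, hA⟩ := posSemidef_iff_eq_sum_vecMulVec.1 hps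
  let R : Matrix (Fin m) (Fin N) ℝ := Matrix.of A
  have hR : Wᵀ * W + Rᵀ * R = 1 := by
    have : Rᵀ * R = ∑ i, vecMulVec (A i) (star (A i)) := by
      ext a b
      simp [Matrix.mul_apply, R, Matrix.sum_apply, vecMulVec_apply]
    rw [this, ← hA]; abel
  let Q : Matrix (Fin N) (Fin r ⊕ Fin m) ℝ := Matrix.fromCols Wᵀ Rᵀ
  have hQ : Q * Qᵀ = 1 := by
    simp only [Q]
    rw [transpose_fromCols, fromCols_mul_fromRows, transpose_transpose, transpose_transpose, hR]
  let Q' : Matrix (Fin N) (Fin r ⊕ Fin m) ℝ := Matrix.fromCols Wᵀ (-Rᵀ)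
  have hQ' : Q' * Q'ᵀ = 1 := by
    simp only [Q']
    rw [transpose_fromCols, fromCols_mul_fromRows, transpose_neg, transpose_transpose,
      transpose_transpose, Matrix.neg_mul, Matrix.mul_neg, neg_neg, hR]
  let P : Matrix (Fin r) (Fin r ⊕ Fin m) ℝ := Matrix.fromCols 1 0
  have hP : P * Pᵀ = 1 := by
    simp only [P]
    rw [transpose_fromCols, fromCols_mul_fromRows]
    simp
  let F : (Fin N → ℝ) → ℝ := fun g => ‖∑ k, g k • x k‖ ^ 2
  have hF : Continuous F := by fun_prop
  let G : (Fin r → ℝ) → ℝ := fun g => ‖∑ j, g j • ∑ k, w j k • x k‖ ^ 2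
  have hG : Continuous G := by fun_prop
  have e1 : ∫ h, F (Q *ᵥ h) ∂(gam _) = gav x := gam_integral Q hQ F hF
  have e2 : ∫ h, F (Q' *ᵥ h) ∂(gam _) = gav x := gam_integral Q' hQ' F hF
  have e3 : ∫ h, G (P *ᵥ h) ∂(gam _) = gav (fun j => ∑ k, w j k • x k) := gam_integral P hP G hG
  have i0 : ∀ {n : ℕ} (S : Matrix (Fin n) (Fin r ⊕ Fin m) ℝ) (y : Fin n → E),
      Integrable (fun h => ‖∑ k, (S *ᵥ h) k • y k‖ ^ 2) (gam (Fin r ⊕ Fin m)) := by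
    intro n S y
    refine (int_lin (fun i => ∑ k, S k i • y k)).congr (Filter.Eventually.of_forall fun h => ?_)
    simp only [mulVec, dotProduct]
    congr 2
    simp_rw [Finset.smul_sum, Finset.sum_smul]
    rw [Finset.sum_comm]
    refine Finset.sum_congr rfl fun k _ => Finset.sum_congr rfl fun i _ => ?_
    rw [smul_smul, mul_comm]
  have hle : ∫ h, G (P *ᵥ h) ∂(gam _) ≤ ∫ h, (F (Q *ᵥ h) + F (Q' *ᵥ h)) / 2 ∂(gam _) := by
    refine integral_mono (i0 P _) (((i0 Q x).add (i0 Q' x)).div_const 2) fun h => ?_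
    simp only [F, G]
    have hPh : P *ᵥ h = fun j => h (Sum.inl j) := by
      simp only [P, fromCols_mulVec, one_mulVec, zero_mulVec, add_zero]; rfl
    have hWx : ∑ k, (Wᵀ *ᵥ (h ∘ Sum.inl)) k • x k = ∑ j, h (Sum.inl j) • ∑ k, w j k • x k := by
      simp only [mulVec, dotProduct, Finset.smul_sum, Finset.sum_smul, transpose_apply, W,
        Matrix.of_apply, Function.comp]
      rw [Finset.sum_comm]
      refine Finset.sum_congr rfl fun k _ => Finset.sum_congr rfl fun i _ => ?_
      rw [smul_smul, mul_comm]
    have hQh : ∑ k, (Q *ᵥ h) k • x k = (∑ j, h (Sum.inl j) • ∑ k, w j k • x k)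
        + ∑ k, (Rᵀ *ᵥ (h ∘ Sum.inr)) k • x k := by
      simp only [Q, fromCols_mulVec, Pi.add_apply, add_smul, Finset.sum_add_distrib]
      rw [hWx]
    have hQh' : ∑ k, (Q' *ᵥ h) k • x k = (∑ j, h (Sum.inl j) • ∑ k, w j k • x k)
        - ∑ k, (Rᵀ *ᵥ (h ∘ Sum.inr)) k • x k := by
      simp only [Q', fromCols_mulVec, Pi.add_apply, add_smul, Finset.sum_add_distrib, neg_mulVec,
        Pi.neg_apply, neg_smul, Finset.sum_neg_distrib]
      rw [hWx, sub_eq_add_neg]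
    rw [hPh, hQh, hQh']
    generalize ∑ j, h (Sum.inl j) • ∑ k, w j k • x k = a
    generalize ∑ k, (Rᵀ *ᵥ (h ∘ Sum.inr)) k • x k = b
    have h1 : ‖a‖ ≤ (‖a + b‖ + ‖a - b‖) / 2 := by
      have : (2 : ℝ) • a = (a + b) + (a - b) := by rw [two_smul]; abel
      have h2 := norm_add_le (a + b) (a - b)
      rw [← this, norm_smul] at h2
      norm_num at h2
      linarith
    have := norm_nonneg a
    nlinarith [sq_nonneg (‖a + b‖ - ‖a - b‖)]
  rw [integral_div, integral_add (i0 Q x) (i0 Q' x), e1, e2, e3] at hle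
  linarith

/-- Truncation remainder. -/
def hh (t s : ℝ) : ℝ := s - max (-t) (min s t)

lemma hh_cont (t : ℝ) : Continuous (hh t) := by unfold hh; fun_prop

lemma hh_sq_le (t : ℝ) (ht : 1 ≤ t) (s : ℝ) :
    hh t s ^ 2 ≤ 2 * Real.exp (-t ^ 2) * (Real.exp (t * s) + Real.exp (-t * s)) := by
  have key : ∀ u : ℝ, 0 ≤ u → u ^ 2 ≤ 2 * Real.exp (t * u) := by
    intro u hu
    have h1 := Real.quadratic_le_exp_of_nonneg (x := t * u) (by positivity)
    have : 0 ≤ t * u := by positivity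
    nlinarith [mul_le_mul_of_nonneg_right ht hu]
  have e1 := Real.exp_pos (t * s)
  have e2 := Real.exp_pos (-t * s)
  have e3 := Real.exp_pos (-t ^ 2)
  unfold hh
  rcases le_total s (-t) with h | h
  · rw [min_eq_left (by linarith), max_eq_left h]
    have := key (-t - s) (by linarith)
    have h2 : Real.exp (t * (-t - s)) = Real.exp (-t ^ 2) * Real.exp (-t * s) := by
      rw [← Real.exp_add]; congr 1; ring
    rw [h2] at this
    nlinarith [mul_pos e3 e1]
  · rcases le_total s t with h' | h'
    · rw [min_eq_left h', max_eq_right h]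
      rw [sub_self, zero_pow two_ne_zero]
      positivity
    · rw [min_eq_right h', max_eq_right (by linarith)]
      have := key (s - t) (by linarith)
      have h2 : Real.exp (t * (s - t)) = Real.exp (-t ^ 2) * Real.exp (t * s) := by
        rw [← Real.exp_add]; congr 1; ring
      rw [h2] at this
      nlinarith [mul_pos e3 e2]

lemma hh_int (t : ℝ) (ht : 1 ≤ t) : Integrable (fun s => hh t s ^ 2) (gaussianReal 0 1) := by
  refine Integrable.mono' (((integrable_exp_mul_gaussianReal t).add
    (integrable_exp_mul_gaussianReal (-t))).const_mul (2 * Real.exp (-t ^ 2)))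
    ((hh_cont t).pow 2).aestronglyMeasurable (Filter.Eventually.of_forall fun s => ?_)
  rw [Real.norm_eq_abs, abs_of_nonneg (sq_nonneg _)]
  exact hh_sq_le t ht s

lemma mgf_val (t : ℝ) : ∫ s, Real.exp (t * s) ∂(gaussianReal 0 1) = Real.exp (t ^ 2 / 2) := by
  have := congrFun (mgf_fun_id_gaussianReal (μ := 0) (v := 1)) t
  simpa [mgf] using this

lemma hh_int_le (t : ℝ) (ht : 1 ≤ t) :
    ∫ s, hh t s ^ 2 ∂(gaussianReal 0 1) ≤ 4 * Real.exp (-t ^ 2 / 2) := by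
  calc ∫ s, hh t s ^ 2 ∂(gaussianReal 0 1)
      ≤ ∫ s, 2 * Real.exp (-t ^ 2) * (Real.exp (t * s) + Real.exp (-t * s)) ∂(gaussianReal 0 1) :=
        integral_mono (hh_int t ht) (((integrable_exp_mul_gaussianReal t).add
          (integrable_exp_mul_gaussianReal (-t))).const_mul (2 * Real.exp (-t ^ 2))) (hh_sq_le t ht)
    _ = 4 * Real.exp (-t ^ 2 / 2) := by
        rw [integral_const_mul, integral_add (integrable_exp_mul_gaussianReal t)
          (integrable_exp_mul_gaussianReal (-t)), mgf_val, mgf_val, neg_sq]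
        have : Real.exp (-t ^ 2 / 2) = Real.exp (-t ^ 2) * Real.exp (t ^ 2 / 2) := by
          rw [← Real.exp_add]; congr 1; ring
        rw [this]; ring

lemma gav_le_rad [FiniteDimensional ℝ E] (n : ℕ) (hn : Module.finrank ℝ E = n) (hn0 : 0 < n)
    (x : ι → E) : gav x ≤ 16 * (1 + Real.log n) * rad x := by
  have hn1 : (1 : ℝ) ≤ n := by exact_mod_cast hn0
  have hlog : 0 ≤ Real.log n := Real.log_nonneg hn1
  set t := Real.sqrt (1 + 8 * Real.log n) with ht'
  have htsq : t ^ 2 = 1 + 8 * Real.log n := Real.sq_sqrt (by positivity)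
  have ht : 1 ≤ t := by rw [ht']; apply Real.le_sqrt_of_sq_le; linarith
  set η := ∫ s, hh t s ^ 2 ∂(gaussianReal 0 1) with hη
  have hη1 : (n : ℝ) ^ 4 * η ≤ 4 := by
    have h1 : Real.exp (-t ^ 2 / 2) ≤ ((n : ℝ) ^ 4)⁻¹ := by
      have : ((n : ℝ) ^ 4)⁻¹ = Real.exp (-(4 * Real.log n)) := by
        rw [Real.exp_neg]
        congr 1
        have : (4 : ℝ) * Real.log n = ((4 : ℕ) : ℝ) * Real.log n := by norm_num
        rw [this, Real.exp_nat_mul, Real.exp_log (by linarith)]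
      rw [this]
      apply Real.exp_le_exp.2
      rw [htsq]; linarith
    have h2 := (hh_int_le t ht).trans (mul_le_mul_of_nonneg_left h1 (by norm_num))
    calc (n : ℝ) ^ 4 * η ≤ (n : ℝ) ^ 4 * (4 * ((n : ℝ) ^ 4)⁻¹) := by gcongr
      _ = 4 := by field_simp
  have hik : ∀ k : ι, Integrable (fun g : ι → ℝ => hh t (g k) ^ 2 * ‖x k‖ ^ 2) (gam ι) := fun k =>
    Integrable.mul_const ((gam_eval k).integrable_comp_of_integrable (hh_int t ht)) _
  rw [gav_eq_rad]
  calc ∫ g, rad (fun k => g k • x k) ∂(gam ι)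
      ≤ ∫ g, (2 * (t ^ 2 * rad x) + 2 * ((n : ℝ) ^ 2 * ∑ k, hh t (g k) ^ 2 * ‖x k‖ ^ 2)) ∂(gam ι) := by
        refine integral_mono (int_rad x) (Integrable.add (integrable_const _)
          (Integrable.const_mul (Integrable.const_mul (integrable_finsetSum _ fun k _ => hik k) _) _)) fun g => ?_
        have h1 := rad_add_le (fun k => (max (-t) (min (g k) t)) • x k) (fun k => hh t (g k) • x k)
        have h2 : (fun k => (max (-t) (min (g k) t)) • x k + hh t (g k) • x k) = fun k => g k • x k := by
          ext k; rw [← add_smul]; simp [hh]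
        rw [h2] at h1
        have h3 := rad_contr' t (by linarith) (fun k => max (-t) (min (g k) t)) (fun k => by
          rw [abs_le]; exact ⟨le_max_left _ _, max_le (by linarith) (min_le_right _ _)⟩) x
        have h4 := type_poly n hn (fun k => hh t (g k) • x k)
        simp only [norm_smul, mul_pow, Real.norm_eq_abs, sq_abs] at h4
        simp only
        linarith
    _ = 2 * (t ^ 2 * rad x) + 2 * ((n : ℝ) ^ 2 * (η * ∑ k, ‖x k‖ ^ 2)) := by
        rw [integral_add (integrable_const _) (Integrable.const_mul (Integrable.const_mul
          (integrable_finsetSum _ fun k _ => hik k) _) _), integral_const, integral_const_mul,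
          integral_const_mul, integral_finsetSum _ fun k _ => hik k]
        simp only [probReal_univ, one_smul]
        congr 3
        rw [Finset.mul_sum]
        refine Finset.sum_congr rfl fun k _ => ?_
        rw [integral_mul_const]
        congr 1
        have hcc : Continuous (fun s => hh t s ^ 2) := (hh_cont t).pow 2
        rw [hη, ← (gam_eval k).map_eq, integral_map (gam_eval k).measurable.aemeasurable hcc.aestronglyMeasurable]
    _ ≤ 2 * (t ^ 2 * rad x) + 2 * ((n : ℝ) ^ 2 * (η * ((n : ℝ) ^ 2 * rad x))) := by
        have hη0 : 0 ≤ η := integral_nonneg fun s => sq_nonneg _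
        have := cotype_poly n hn x
        gcongr
    _ ≤ 16 * (1 + Real.log n) * rad x := by
        have h0 := rad_nonneg x
        rw [htsq]
        nlinarith [mul_le_mul_of_nonneg_right hη1 h0, mul_nonneg hlog h0]
end gauss

section core
open Matrix
variable {E : Type*} [NormedAddCommGroup E] [NormedSpace ℝ E] [FiniteDimensional ℝ E]

lemma frame {N : ℕ} (X : EuclideanSpace ℝ (Fin N) →ₗ[ℝ] E) :
    ∃ (r : ℕ) (b : Fin r → EuclideanSpace ℝ (Fin N)), r ≤ Module.finrank ℝ E ∧ Orthonormal ℝ b ∧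
      ∀ c, X c = ∑ i, inner ℝ (b i) c • X (b i) := by
  have hFn : Module.finrank ℝ X.kerᗮ ≤ Module.finrank ℝ E := by
    have h1 := Submodule.finrank_add_finrank_orthogonal X.ker
    have h2 := X.finrank_range_add_finrank_ker
    have h3 : Module.finrank ℝ X.range ≤ Module.finrank ℝ E := Submodule.finrank_le _
    omega
  have b := stdOrthonormalBasis ℝ X.kerᗮ
  refine ⟨_, fun i => (b i : EuclideanSpace ℝ (Fin N)), hFn,
    b.orthonormal.comp_linearIsometry (X.kerᗮ).subtypeₗᵢ, fun c => ?_⟩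
  have h1 : X (c - (X.kerᗮ).starProjection c) = 0 := by
    have h2 : c - (X.kerᗮ).starProjection c ∈ X.kerᗮᗮ := Submodule.sub_starProjection_mem_orthogonal c
    rw [Submodule.orthogonal_orthogonal] at h2
    exact h2
  rw [map_sub, sub_eq_zero] at h1
  rw [h1, Submodule.starProjection_apply, ← b.sum_repr ((X.kerᗮ).orthogonalProjectionOnto c)]
  simp [b.repr_apply_apply]

lemma core_reduction (n : ℕ) (hn : Module.finrank ℝ E = n) (hn0 : 0 < n) {N : ℕ} (x : Fin N → E)
    (hpos : 0 < ∑ k, ‖x k‖ ^ 2) :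
    ∃ (r : ℕ) (y : Fin r → E), r ≤ n ∧ ∑ k, ‖x k‖ ^ 2 ≤ 4 * ∑ j, ‖y j‖ ^ 2 ∧
      rad y ≤ 16 / am ^ 2 * (1 + Real.log n) * rad x := by
  obtain ⟨X, hX⟩ : ∃ X : EuclideanSpace ℝ (Fin N) →ₗ[ℝ] E, ∀ c, X c = ∑ k, c k • x k :=
    ⟨{ toFun := fun c => ∑ k, c k • x k
       map_add' := fun a b => by simp [add_smul, Finset.sum_add_distrib]
       map_smul' := fun a b => by simp [mul_smul, Finset.smul_sum] }, fun _ => rfl⟩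
  obtain ⟨r, b, hr, hort, hproj⟩ := frame X
  rw [hn] at hr
  let v : Fin N → Fin r → ℝ := fun k i => b i k
  have hv : ∑ k, vecMulVec (v k) (v k) = 1 := by
    ext i j
    rw [Matrix.sum_apply, Matrix.one_apply]
    have := (orthonormal_iff_ite.1 hort) i j
    rw [← this, PiLp.inner_apply]
    refine Finset.sum_congr rfl fun k _ => ?_
    simp [vecMulVec_apply, v, mul_comm]
  have hxk : ∀ k, x k = ∑ i, v k i • X (b i) := by
    intro k
    have h1 := hproj (EuclideanSpace.single k 1)
    rw [hX] at h1
    simpa [EuclideanSpace.inner_single_right, v, Pi.single_apply] using h1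
  obtain ⟨idx, s, hs, hsz, hsum⟩ := bss v hv (fun k => ‖x k‖ ^ 2) (fun k hk => by
    rw [hxk k, hk]; simp) hpos
  let w : Fin (Fintype.card (Fin (r))) → Fin N → ℝ := fun j k =>
    Real.sqrt (s j) * (v (idx j) ⬝ᵥ v k)
  have hw : ∀ z : Fin N → ℝ, ∑ j, (w j ⬝ᵥ z) ^ 2 ≤ z ⬝ᵥ z := by
    intro z
    let ζ : Fin (r) → ℝ := fun i => inner ℝ (b i) (WithLp.toLp 2 z)
    have hζ : ζ ⬝ᵥ ζ ≤ z ⬝ᵥ z := by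
      have h1 := hort.sum_inner_products_le (x := WithLp.toLp 2 z) (s := Finset.univ)
      rw [EuclideanSpace.norm_sq_eq] at h1
      simpa [dotProduct, ζ, ← sq] using h1
    refine le_trans (le_of_eq ?_) ((hsz ζ).trans hζ)
    refine Finset.sum_congr rfl fun j _ => ?_
    have : w j ⬝ᵥ z = Real.sqrt (s j) * (v (idx j) ⬝ᵥ ζ) := by
      simp only [dotProduct, w, ζ, PiLp.inner_apply, Finset.mul_sum, Finset.sum_mul]
      rw [Finset.sum_comm]
      refine Finset.sum_congr rfl fun i _ => Finset.sum_congr rfl fun k _ => ?_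
      simp [v]; ring
    rw [this, mul_pow, Real.sq_sqrt (hs j)]
  have hy : ∀ j, ∑ k, w j k • x k = Real.sqrt (s j) • x (idx j) := by
    intro j
    have h1 : ∀ i, X (b i) = ∑ k, v k i • x k := fun i => hX _
    rw [hxk (idx j)]
    simp only [h1, w, dotProduct, Finset.smul_sum, Finset.mul_sum, Finset.sum_smul, smul_smul]
    rw [Finset.sum_comm]
  refine ⟨_, fun j => ∑ k, w j k • x k, by simpa using hr, ?_, ?_⟩
  · have : ∀ j, ‖∑ k, w j k • x k‖ ^ 2 = s j * ‖x (idx j)‖ ^ 2 := by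
      intro j
      rw [hy, norm_smul, mul_pow, Real.norm_eq_abs, sq_abs, Real.sq_sqrt (hs j)]
    simp only [this]
    linarith
  · have h1 := rad_le_gav (fun j => ∑ k, w j k • x k)
    have h2 := gav_mono x w hw
    have h3 := gav_le_rad n hn hn0 x
    have := am_pos
    have h4 : 16 / am ^ 2 * (1 + Real.log n) * rad x = (16 * (1 + Real.log n) * rad x) / am ^ 2 := by
      ring
    rw [h4, le_div_iff₀ (by positivity)]
    linarith

end core

section final
variable {E : Type*} [NormedAddCommGroup E] [NormedSpace ℝ E] [FiniteDimensional ℝ E]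

lemma sum_sq_bound (q : ℝ) (hq : 2 < q) (n : ℕ) (hn : Module.finrank ℝ E = n) (hn0 : 0 < n)
    (m : ℕ) (hnm : n ≤ m) (d : ℝ) (hd0 : 0 ≤ d)
    (hd : ∀ y : Fin m → E, radAvg y ≤ 1 → ∑ k, ‖y k‖ ^ q ≤ d ^ q)
    {N : ℕ} (x : Fin N → E) (hx : rad x ≤ 1) :
    ∑ k, ‖x k‖ ^ 2 ≤ 4 * (16 / am ^ 2 * (1 + Real.log n)) * ((n : ℝ) ^ (1 - 2 / q) * d ^ 2) := by
  have hn1 : (1 : ℝ) ≤ n := by exact_mod_cast hn0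
  have hlog : 0 ≤ Real.log n := Real.log_nonneg hn1
  have ham := am_pos
  set R := 16 / am ^ 2 * (1 + Real.log n) with hR
  have hR0 : 0 < R := by positivity
  have hxs : 0 ≤ ∑ k, ‖x k‖ ^ 2 := Finset.sum_nonneg fun k _ => by positivity
  rcases hxs.eq_or_lt with h0 | hpos
  · rw [← h0]; positivity
  obtain ⟨r, y, hr, hxy, hy⟩ := core_reduction n hn hn0 x hpos
  rw [← hR] at hy
  have hyR : rad y ≤ R := hy.trans (mul_le_of_le_one_right hR0.le hx)
  set c := (Real.sqrt R)⁻¹ with hc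
  have hc0 : 0 < c := by positivity
  have hc2 : c ^ 2 = R⁻¹ := by rw [hc, inv_pow, Real.sq_sqrt hR0.le]
  set u : Fin r → E := fun j => c • y j with hu
  have hurad : rad u ≤ 1 := by
    rw [hu, rad_smul, hc2, inv_mul_le_iff₀ hR0, mul_one]; exact hyR
  obtain ⟨w, hw, hws⟩ := exists_pad u Finset.univ m (by simp; omega)
  have huq : ∑ j, ‖u j‖ ^ q ≤ d ^ q := by
    have h1 := hd w (hw.trans hurad)
    rwa [hws (fun t => t ^ q) (Real.zero_rpow (by linarith))] at h1
  set S := ∑ j, ‖u j‖ ^ 2 with hS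
  have hS0 : 0 ≤ S := Finset.sum_nonneg fun k _ => by positivity
  have hyS : ∑ j, ‖y j‖ ^ 2 = R * S := by
    have : ∀ j, ‖u j‖ ^ 2 = R⁻¹ * ‖y j‖ ^ 2 := fun j => by
      simp only [hu]
      rw [norm_smul, mul_pow, Real.norm_eq_abs, sq_abs, hc2]
    rw [hS]; simp only [this]; rw [← Finset.mul_sum]; field_simp
  have hSle : S ≤ (n : ℝ) ^ (1 - 2 / q) * d ^ 2 := by
    have h1 := Real.rpow_sum_le_const_mul_sum_rpow (Finset.univ : Finset (Fin r))
      (fun j => ‖u j‖ ^ 2) (p := q / 2) (by linarith)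
    simp only [abs_pow, abs_norm] at h1
    rw [← hS] at h1
    have h2 : ∀ j, (‖u j‖ ^ 2) ^ (q / 2) = ‖u j‖ ^ q := fun j => by
      rw [← Real.rpow_natCast, ← Real.rpow_mul (norm_nonneg _)]; congr 1; push_cast; ring
    simp only [h2, Finset.card_univ, Fintype.card_fin] at h1
    have h3 : S ^ (q / 2) ≤ (n : ℝ) ^ (q / 2 - 1) * d ^ q := by
      refine h1.trans ?_
      have : (r : ℝ) ^ (q / 2 - 1) ≤ (n : ℝ) ^ (q / 2 - 1) :=
        Real.rpow_le_rpow (by positivity) (by exact_mod_cast hr) (by linarith)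
      have h4 : 0 ≤ ∑ j, ‖u j‖ ^ q := Finset.sum_nonneg fun k _ => by positivity
      gcongr
    rw [← Real.rpow_le_rpow_iff hS0 (by positivity) (show 0 < q / 2 by linarith)]
    refine h3.trans (le_of_eq ?_)
    rw [Real.mul_rpow (by positivity) (by positivity), ← Real.rpow_mul (by positivity),
      ← Real.rpow_natCast d, ← Real.rpow_mul hd0]
    congr 2
    · field_simp
    · push_cast; ring
  calc ∑ k, ‖x k‖ ^ 2 ≤ 4 * ∑ j, ‖y j‖ ^ 2 := hxy
    _ = 4 * R * S := by rw [hyS]; ring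
    _ ≤ _ := by gcongr

lemma real_main (q : ℝ) (hq : 2 < q) (n : ℕ) (hn : Module.finrank ℝ E = n) (hn0 : 0 < n)
    (m : ℕ) (hnm : n ≤ m) (d : ℝ) (hd0 : 0 ≤ d)
    (hd : ∀ y : Fin m → E, radAvg y ≤ 1 → ∑ k, ‖y k‖ ^ q ≤ d ^ q)
    (hm : 4 * (16 / am ^ 2 * (1 + Real.log n)) * (n : ℝ) ^ (1 - 2 / q) ≤ (m : ℝ) ^ (1 - 2 / q))
    {N : ℕ} (x : Fin N → E) (hx : radAvg x ≤ 1) :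
    ∑ k, ‖x k‖ ^ q ≤ 2 * d ^ q := by
  rw [radAvg_eq_rad] at hx
  have hm0 : (0 : ℝ) < m := by exact_mod_cast (by omega : 0 < m)
  have hq0 : 0 < q := by linarith
  set τ := d * (m : ℝ) ^ (-(1 / q)) with hτ
  have hτ0 : 0 ≤ τ := by positivity
  have hτq : m * τ ^ q = d ^ q := by
    rw [hτ, Real.mul_rpow hd0 (by positivity), ← Real.rpow_mul hm0.le]
    have : -(1 / q) * q = -1 := by field_simp
    rw [this, Real.rpow_neg_one]; field_simp
  have hpad : ∀ B : Finset (Fin N), B.card ≤ m → ∑ k ∈ B, ‖x k‖ ^ q ≤ d ^ q := by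
    intro B hB
    obtain ⟨w, hw, hws⟩ := exists_pad x B m hB
    have h1 := hd w (hw.trans hx)
    rwa [hws (fun t => t ^ q) (Real.zero_rpow (by linarith))] at h1
  set B := Finset.univ.filter fun k => τ < ‖x k‖ with hB
  have hBm : B.card ≤ m := by
    by_contra hcon
    push Not at hcon
    obtain ⟨B', hB', hc⟩ := Finset.exists_subset_card_eq hcon.le
    have h1 := hpad B' hc.le
    have h2 : ∑ k ∈ B', τ ^ q < ∑ k ∈ B', ‖x k‖ ^ q := by
      refine Finset.sum_lt_sum_of_nonempty (Finset.card_pos.1 (by omega)) fun k hk => ?_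
      exact Real.rpow_lt_rpow hτ0 (Finset.mem_filter.1 (hB' hk)).2 hq0
    rw [Finset.sum_const, hc, nsmul_eq_mul, hτq] at h2
    linarith
  have hrest : ∑ k ∈ Finset.univ.filter (fun k => ¬ τ < ‖x k‖), ‖x k‖ ^ q ≤ d ^ q := by
    calc ∑ k ∈ Finset.univ.filter (fun k => ¬ τ < ‖x k‖), ‖x k‖ ^ q
        ≤ ∑ k ∈ Finset.univ.filter (fun k => ¬ τ < ‖x k‖), τ ^ (q - 2) * ‖x k‖ ^ 2 := by
          refine Finset.sum_le_sum fun k hk => ?_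
          have h1 := not_lt.1 (Finset.mem_filter.1 hk).2
          have h2 : ‖x k‖ ^ q = ‖x k‖ ^ (q - 2) * ‖x k‖ ^ 2 := by
            rw [← Real.rpow_natCast ‖x k‖ 2, ← Real.rpow_add_of_nonneg (norm_nonneg _) (by linarith)
              (by norm_num)]
            congr 1; push_cast; ring
          rw [h2]
          have := Real.rpow_le_rpow (norm_nonneg _) h1 (show 0 ≤ q - 2 by linarith)
          gcongr
      _ ≤ ∑ k, τ ^ (q - 2) * ‖x k‖ ^ 2 :=
          Finset.sum_le_sum_of_subset_of_nonneg (Finset.filter_subset _ _) fun k _ _ => by positivity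
      _ = τ ^ (q - 2) * ∑ k, ‖x k‖ ^ 2 := by rw [Finset.mul_sum]
      _ ≤ τ ^ (q - 2) * (4 * (16 / am ^ 2 * (1 + Real.log n)) * ((n : ℝ) ^ (1 - 2 / q) * d ^ 2)) := by
          have := sum_sq_bound q hq n hn hn0 m hnm d hd0 hd x hx
          gcongr
      _ ≤ τ ^ (q - 2) * ((m : ℝ) ^ (1 - 2 / q) * d ^ 2) := by
          rw [← mul_assoc (4 * _)]
          gcongr
      _ = d ^ q := by
          rw [hτ, Real.mul_rpow hd0 (by positivity), ← Real.rpow_mul hm0.le]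
          have h1 : -(1 / q) * (q - 2) = -(1 - 2 / q) := by field_simp
          rw [h1, Real.rpow_neg hm0.le]
          have h2 : d ^ q = d ^ (q - 2) * d ^ 2 := by
            rw [← Real.rpow_natCast d 2, ← Real.rpow_add_of_nonneg hd0 (by linarith)
              (by norm_num)]
            congr 1; push_cast; ring
          rw [h2]
          have : (m : ℝ) ^ (1 - 2 / q) ≠ 0 := by positivity
          field_simp
  rw [← Finset.sum_filter_add_sum_filter_not Finset.univ (fun k => τ < ‖x k‖)]
  have := hpad B hBm
  linarith

lemma ennreal_bridge (q : ℝ) (hq : 0 < q) (d : ℝ) (hd0 : 0 ≤ d) {N : ℕ} (x : Fin N → E) :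
    (∑ k, ENNReal.ofReal ‖x k‖ ^ q) ^ (1 / q) ≤ ENNReal.ofReal d ↔ ∑ k, ‖x k‖ ^ q ≤ d ^ q := by
  have h1 : ∑ k, ENNReal.ofReal ‖x k‖ ^ q = ENNReal.ofReal (∑ k, ‖x k‖ ^ q) := by
    rw [ENNReal.ofReal_sum_of_nonneg fun k _ => by positivity]
    exact Finset.sum_congr rfl fun k _ => ENNReal.ofReal_rpow_of_nonneg (norm_nonneg _) hq.le
  rw [h1, one_div, ENNReal.rpow_inv_le_iff hq, ENNReal.ofReal_rpow_of_nonneg hd0 hq.le,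
    ENNReal.ofReal_le_ofReal_iff (by positivity)]

lemma cotypeN_bound (q : ℝ) (hq : 2 < q) (n : ℕ) (hn : Module.finrank ℝ E = n) (hn0 : 0 < n)
    (m : ℕ) (hnm : n ≤ m)
    (hm : 4 * (16 / am ^ 2 * (1 + Real.log n)) * (n : ℝ) ^ (1 - 2 / q) ≤ (m : ℝ) ^ (1 - 2 / q)) :
    cotype q (ContinuousLinearMap.id ℝ E) ≤ 2 * cotypeN q m (ContinuousLinearMap.id ℝ E) := by
  have hq0 : 0 < q := by linarith
  by_cases htop : cotypeN q m (ContinuousLinearMap.id ℝ E) = ⊤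
  · rw [htop]; simp
  set d := (cotypeN q m (ContinuousLinearMap.id ℝ E)).toReal with hd'
  have hdo : cotypeN q m (ContinuousLinearMap.id ℝ E) = ENNReal.ofReal d :=
    (ENNReal.ofReal_toReal htop).symm
  have hd0 : 0 ≤ d := ENNReal.toReal_nonneg
  have hd : ∀ y : Fin m → E, radAvg y ≤ 1 → ∑ k, ‖y k‖ ^ q ≤ d ^ q := by
    intro y hy
    rw [← ennreal_bridge q hq0 d hd0, ← hdo]
    exact le_iSup (fun x : {x : Fin m → E // Real.sqrt (radAvg x) ≤ 1} =>
      (∑ k, ENNReal.ofReal ‖(ContinuousLinearMap.id ℝ E) (x.1 k)‖ ^ q) ^ (1 / q))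
      ⟨y, Real.sqrt_le_one.2 hy⟩
  have h2 : (2 : ℝ≥0∞) * ENNReal.ofReal d = ENNReal.ofReal (2 * d) := by
    rw [ENNReal.ofReal_mul (by norm_num)]; simp
  rw [hdo, h2]
  refine iSup_le fun N => iSup_le fun x => ?_
  refine (ennreal_bridge q hq0 (2 * d) (by positivity) x.1).2 ?_
  refine (real_main q hq n hn hn0 m hnm d hd0 hd hm x.1 (Real.sqrt_le_one.1 x.2)).trans ?_
  rw [Real.mul_rpow (by norm_num) hd0]
  have : (2 : ℝ) ≤ 2 ^ q := by
    calc (2 : ℝ) = 2 ^ (1 : ℝ) := by simp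
      _ ≤ 2 ^ q := Real.rpow_le_rpow_of_exponent_le (by norm_num) (by linarith)
  gcongr

end final

/-- for `2 < q < ∞` and an `n`-dimensional real Banach space `E`,
there are an absolute constant `c₀` and `m ≤ n·(c₀(1+ln n))^{1/(1-2/q)}` with
`C_q(Id_E) ≤ 2 · C_q^m(Id_E)`. -/
theorem statement4 :
    ∃ c₀ : ℝ, 0 < c₀ ∧
      ∀ (q : ℝ), 2 < q →
        ∀ (E : Type*) [NormedAddCommGroup E] [NormedSpace ℝ E] [CompleteSpace E]
          [FiniteDimensional ℝ E] (n : ℕ), Module.finrank ℝ E = n →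
          ∃ m : ℕ, (m : ℝ) ≤ n * (c₀ * (1 + Real.log n)) ^ (1 / (1 - 2 / q)) ∧
            cotype q (ContinuousLinearMap.id ℝ E) ≤
              2 * cotypeN q m (ContinuousLinearMap.id ℝ E) := by
  have ham := am_pos
  refine ⟨8 * (16 / am ^ 2) + 1, by positivity, fun q hq E _ _ _ _ n hn => ?_⟩
  rcases Nat.eq_zero_or_pos n with rfl | hn0
  · refine ⟨0, by simp, ?_⟩
    have : Subsingleton E := Module.finrank_zero_iff.1 hn
    refine (iSup_le fun N => iSup_le fun x => ?_).trans bot_le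
    have hz : ∀ k, x.1 k = 0 := fun k => Subsingleton.elim _ _
    have hq0 : 0 < q := by linarith
    simp [hz, hq0]
  have hn1 : (1 : ℝ) ≤ n := by exact_mod_cast hn0
  have hlog : 0 ≤ Real.log n := Real.log_nonneg hn1
  set c := 8 * (16 / am ^ 2) + 1 with hc
  have hc1 : 1 ≤ c := by rw [hc]; have : 0 < 16 / am ^ 2 := by positivity
                         linarith
  set K := c * (1 + Real.log n) with hK
  have hK1 : 1 ≤ K := by rw [hK]; nlinarith
  set θ := 1 - 2 / q with hθ
  have hθ0 : 0 < θ := by rw [hθ, sub_pos, div_lt_one (by linarith)]; exact hq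
  have hθ1 : θ ≤ 1 := by
    rw [hθ]; have : 0 < 2 / q := by positivity
    linarith
  set M := (n : ℝ) * K ^ (1 / θ) with hM
  have hKθ : 1 ≤ K ^ (1 / θ) := Real.one_le_rpow hK1 (by positivity)
  have hMn : (n : ℝ) ≤ M := le_mul_of_one_le_right (by positivity) hKθ
  have hM0 : 0 ≤ M := by positivity
  have hfl : (⌊M⌋₊ : ℝ) ≤ M := Nat.floor_le hM0
  have hnm : n ≤ ⌊M⌋₊ := Nat.le_floor hMn
  refine ⟨⌊M⌋₊, hfl, cotypeN_bound q hq n hn hn0 _ hnm ?_⟩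
  have hhalf : M / 2 ≤ ⌊M⌋₊ := by
    have h1 := Nat.lt_floor_add_one M
    have h2 : (1 : ℝ) ≤ ⌊M⌋₊ := hn1.trans (by exact_mod_cast hnm)
    linarith
  have h3 : (M / 2) ^ θ ≤ (⌊M⌋₊ : ℝ) ^ θ := Real.rpow_le_rpow (by positivity) hhalf hθ0.le
  refine le_trans ?_ h3
  have h4 : M ^ θ = (n : ℝ) ^ θ * K := by
    rw [hM, Real.mul_rpow (by positivity) (by positivity), ← Real.rpow_mul (by linarith),
      one_div_mul_cancel hθ0.ne', Real.rpow_one]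
  have h5 : (2 : ℝ) ^ θ ≤ 2 := by
    calc (2 : ℝ) ^ θ ≤ 2 ^ (1 : ℝ) := Real.rpow_le_rpow_of_exponent_le (by norm_num) hθ1
      _ = 2 := by simp
  rw [Real.div_rpow hM0 (by norm_num), h4, le_div_iff₀ (by positivity)]
  have h6 : 4 * (16 / am ^ 2 * (1 + Real.log n)) * 2 ≤ K := by
    rw [hK, hc]; nlinarith
  have hnθ : 0 < (n : ℝ) ^ θ := by positivity
  calc 4 * (16 / am ^ 2 * (1 + Real.log n)) * (n : ℝ) ^ θ * 2 ^ θ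
      ≤ 4 * (16 / am ^ 2 * (1 + Real.log n)) * (n : ℝ) ^ θ * 2 := by gcongr
    _ = (n : ℝ) ^ θ * (4 * (16 / am ^ 2 * (1 + Real.log n)) * 2) := by ring
    _ ≤ (n : ℝ) ^ θ * K := by gcongr

end
end

section
/- Let 1 ≤ q ≤ p < ∞ with 1/q = 1/p + 1/r (where q ≤ r ≤ ∞), and assume q ≠ 2 and 2 < r ≤ ∞. Then there exists α > 1 with the following property: for every constant c > 0 and every sequence (k_n) of natural numbers such that π_{p,q}(T) ≤ c · π_{p,q}^{k_n}(T) holds for every n and every bounded operator T between real Banach spaces of rank at most n, there exists a constant c̄ such that n^α ≤ c̄ · k_n for all n. -/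
open scoped ENNReal NNReal BigOperators

noncomputable section

universe u v

theorem hol_aux {ι : Type*} (t : Finset ι) (q : ℝ) (hq : 1 ≤ q) (u g : ι → ℝ)
    (hu : ∀ i, 0 ≤ u i) (hg : ∀ i, 0 ≤ g i) :
    ∑ i ∈ t, u i ^ (1 - 1 / q) * g i ≤
      (∑ i ∈ t, u i) ^ (1 - 1 / q) * (∑ i ∈ t, g i ^ q) ^ (1 / q) := by
  rcases hq.eq_or_lt with rfl | hq
  · simp
  · have hc : (q / (q - 1)).HolderConjugate q := by
      rw [Real.holderConjugate_iff]
      constructor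
      · rw [lt_div_iff₀ (by linarith)]; linarith
      · field_simp; ring
    have := Real.inner_le_Lp_mul_Lq_of_nonneg t (f := fun i => u i ^ (1 - 1 / q)) (g := g) hc
      (fun i _ => Real.rpow_nonneg (hu i) _) (fun i _ => hg i)
    have h1 : 1 / (q / (q - 1)) = 1 - 1 / q := by
      field_simp
    have h2 : ∀ i, (u i ^ (1 - 1 / q)) ^ (q / (q - 1)) = u i := by
      intro i
      rw [← Real.rpow_mul (hu i)]
      have : (1 - 1 / q) * (q / (q - 1)) = 1 := by
        have : q - 1 ≠ 0 := by linarith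
        field_simp
      rw [this, Real.rpow_one]
    simp only [h2, h1] at this
    exact this

theorem greedy_aux {k N : ℕ} (v : Fin k → Fin N → ℝ) (t : Finset (Fin k)) :
    ∃ ε : Fin k → ℝ, (∀ j, |ε j| = 1) ∧
      ∑ j ∈ t, ∑ i, v j i ^ 2 ≤ ∑ i, (∑ j ∈ t, ε j * v j i) ^ 2 := by
  induction t using Finset.induction_on with
  | empty => exact ⟨fun _ => 1, by simp, by simp⟩
  | insert a t ha ih =>
    obtain ⟨ε, h1, h2⟩ := ih
    have key : ∀ d : ℝ, |d| = 1 → ∃ ε' : Fin k → ℝ, (∀ j, |ε' j| = 1) ∧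
        ∑ i, (∑ j ∈ insert a t, ε' j * v j i) ^ 2 = ∑ i, (d * v a i + ∑ j ∈ t, ε j * v j i) ^ 2 := by
      intro d hd
      refine ⟨Function.update ε a d, ?_, ?_⟩
      · intro j
        by_cases hj : j = a
        · subst hj; simpa using hd
        · simpa [Function.update_of_ne hj] using h1 j
      · refine Finset.sum_congr rfl fun i _ => ?_
        rw [Finset.sum_insert ha]
        congr 2
        · simp
        · refine Finset.sum_congr rfl fun j hj => ?_
          have : j ≠ a := fun h => ha (h ▸ hj)
          rw [Function.update_of_ne this]
    rw [Finset.sum_insert ha]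
    have e : ∀ d : ℝ, |d| = 1 → ∑ i, (d * v a i + ∑ j ∈ t, ε j * v j i) ^ 2 =
        ∑ i, v a i ^ 2 + 2 * d * ∑ i, v a i * (∑ j ∈ t, ε j * v j i)
          + ∑ i, (∑ j ∈ t, ε j * v j i) ^ 2 := by
      intro d hd
      have hd2 : d ^ 2 = 1 := by rw [← sq_abs, hd]; norm_num
      rw [Finset.mul_sum, ← Finset.sum_add_distrib, ← Finset.sum_add_distrib]
      refine Finset.sum_congr rfl fun i _ => ?_
      linear_combination (v a i) ^ 2 * hd2
    by_cases hs : 0 ≤ ∑ i, v a i * (∑ j ∈ t, ε j * v j i)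
    · obtain ⟨ε', g1, g2⟩ := key 1 (by simp)
      refine ⟨ε', g1, ?_⟩
      rw [g2, e 1 (by simp)]
      linarith
    · obtain ⟨ε', g1, g2⟩ := key (-1) (by simp)
      refine ⟨ε', g1, ?_⟩
      rw [g2, e (-1) (by simp)]
      linarith

theorem S_aux {k N : ℕ} (q s : ℝ) (hq : 1 ≤ q) (hq2 : q < 2) (hs0 : 0 < s) (hs : 1 / s = 1 / q - 1 / 2)
    (x : Fin k → Fin N → ℝ)
    (hw : ∀ z : Fin N → ℝ, ∑ j, |∑ i, z i * x j i| ^ q ≤ ∑ i, |z i| ^ q) :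
    ∑ j, √(∑ i, x j i ^ 2) ^ s ≤ N := by
  have q0 : 0 < q := by linarith
  set b : Fin k → ℝ := fun j => √(∑ i, x j i ^ 2) with hb
  have hb0 : ∀ j, 0 ≤ b j := fun j => Real.sqrt_nonneg _
  set S := ∑ j, b j ^ s with hS
  have hS0 : 0 ≤ S := Finset.sum_nonneg fun j _ => Real.rpow_nonneg (hb0 j) _
  obtain ⟨ε, h1, h2⟩ := greedy_aux (fun j i => (b j ^ s) ^ (1 - 1 / q) * x j i) Finset.univ
  set z : Fin N → ℝ := fun i => ∑ j, ε j * ((b j ^ s) ^ (1 - 1 / q) * x j i) with hz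
  set Z := ∑ i, z i ^ 2 with hZ
  have hZ0 : 0 ≤ Z := Finset.sum_nonneg fun j _ => sq_nonneg _
  have hSZ : S ≤ Z := by
    refine le_trans (le_of_eq ?_) h2
    refine Finset.sum_congr rfl fun j _ => ?_
    simp only [mul_pow]
    rw [← Finset.mul_sum]
    have hsq : ∑ i, x j i ^ 2 = b j ^ 2 := by
      rw [hb]; simp only
      rw [Real.sq_sqrt (Finset.sum_nonneg fun j _ => sq_nonneg _)]
    rw [hsq]
    rcases (hb0 j).eq_or_lt with h | h
    · rw [← h, Real.zero_rpow hs0.ne']; simp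
    · rw [← Real.rpow_mul h.le, ← Real.rpow_natCast, ← Real.rpow_natCast, ← Real.rpow_mul h.le,
        ← Real.rpow_add h]
      congr 1
      have : s * (1 / q - 1 / 2) = 1 := by rw [← hs]; field_simp
      push_cast
      linarith
  have hZ1 : Z ≤ S ^ (1 - 1 / q) * (∑ i, |z i| ^ q) ^ (1 / q) := by
    have e1 : Z = ∑ j, ε j * (b j ^ s) ^ (1 - 1 / q) * ∑ i, z i * x j i := by
      simp only [hZ, Finset.mul_sum]
      rw [Finset.sum_comm]
      refine Finset.sum_congr rfl fun i _ => ?_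
      rw [sq]
      conv_lhs => rw [hz]
      simp only
      rw [Finset.sum_mul]
      refine Finset.sum_congr rfl fun j _ => ?_
      simp only [hz]
      ring
    have e2 : Z ≤ ∑ j, (b j ^ s) ^ (1 - 1 / q) * |∑ i, z i * x j i| := by
      rw [e1]
      refine Finset.sum_le_sum fun j _ => ?_
      refine (le_abs_self _).trans ?_
      rw [abs_mul, abs_mul, h1 j, one_mul,
        abs_of_nonneg (Real.rpow_nonneg (Real.rpow_nonneg (hb0 j) _) _)]
    refine e2.trans ((hol_aux Finset.univ q hq (fun j => b j ^ s) _
      (fun j => Real.rpow_nonneg (hb0 j) _) (fun j => abs_nonneg _)).trans ?_)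
    refine mul_le_mul_of_nonneg_left ?_ (Real.rpow_nonneg hS0 _)
    refine Real.rpow_le_rpow (Finset.sum_nonneg fun j _ => Real.rpow_nonneg (abs_nonneg _) _) (hw z)
      (by positivity)
  have hZ2 : (∑ i, |z i| ^ q) ^ (1 / q) ≤ (N : ℝ) ^ (1 / q - 1 / 2) * Z ^ (1 / 2 : ℝ) := by
    have := Real.rpow_sum_le_const_mul_sum_rpow (Finset.univ : Finset (Fin N)) (fun i => |z i| ^ q)
      (p := 2 / q) (by rw [le_div_iff₀ q0]; linarith)
    have e3 : ∀ i, (|(|z i| ^ q)|) ^ (2 / q) = z i ^ 2 := by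
      intro i
      rw [abs_of_nonneg (Real.rpow_nonneg (abs_nonneg _) _), ← Real.rpow_mul (abs_nonneg _)]
      have : q * (2 / q) = (2 : ℕ) := by field_simp; norm_num
      rw [this, Real.rpow_natCast, sq_abs]
    have e4 : ∀ i, |(|z i| ^ q)| = |z i| ^ q := fun i =>
      abs_of_nonneg (Real.rpow_nonneg (abs_nonneg _) _)
    simp only [e3] at this
    simp only [e4, Finset.card_univ, Fintype.card_fin] at this
    have h0 : 0 ≤ ∑ i, |z i| ^ q := Finset.sum_nonneg fun j _ => Real.rpow_nonneg (abs_nonneg _) _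
    have h3 := Real.rpow_le_rpow (Real.rpow_nonneg h0 _) this (show (0:ℝ) ≤ 1 / 2 by norm_num)
    rw [← Real.rpow_mul h0, Real.mul_rpow (by positivity) hZ0, ← Real.rpow_mul (by positivity)] at h3
    convert h3 using 2
    · ring
    · congr 1; ring
  rcases hS0.eq_or_lt with h | hSp
  · rw [← h]; positivity
  have hZp : 0 < Z := lt_of_lt_of_le hSp hSZ
  have h5 : Z ^ (1 / 2 : ℝ) ≤ S ^ (1 - 1 / q) * (N : ℝ) ^ (1 / q - 1 / 2) := by
    have h6 : Z ^ (1 / 2 : ℝ) * Z ^ (1 / 2 : ℝ) ≤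
        (S ^ (1 - 1 / q) * (N : ℝ) ^ (1 / q - 1 / 2)) * Z ^ (1 / 2 : ℝ) := by
      rw [← Real.rpow_add hZp]
      norm_num only
      rw [Real.rpow_one, mul_assoc]
      have := mul_le_mul_of_nonneg_left hZ2 (Real.rpow_nonneg hS0 (1 - 1 / q))
      norm_num only at this hZ1 ⊢
      linarith
    exact le_of_mul_le_mul_right h6 (Real.rpow_pos_of_pos hZp _)
  have h7 : S ^ (1 / 2 : ℝ) ≤ S ^ (1 - 1 / q) * (N : ℝ) ^ (1 / q - 1 / 2) :=
    (Real.rpow_le_rpow hS0 hSZ (by norm_num)).trans h5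
  have h8 : S ^ (1 / q - 1 / 2) ≤ (N : ℝ) ^ (1 / q - 1 / 2) := by
    have : S ^ (1 / 2 : ℝ) = S ^ (1 - 1 / q) * S ^ (1 / q - 1 / 2) := by
      rw [← Real.rpow_add hSp]; congr 1; ring
    rw [this] at h7
    exact le_of_mul_le_mul_left h7 (Real.rpow_pos_of_pos hSp _)
  have h9 : 0 < 1 / q - 1 / 2 := by rw [← hs]; positivity
  exact (Real.rpow_le_rpow_iff hS0 (by positivity) h9).1 h8

theorem coord_aux {k N : ℕ} (q : ℝ) (hq : 1 ≤ q) (x : Fin k → Fin N → ℝ)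
    (hw : ∀ z : Fin N → ℝ, ∑ j, |∑ i, z i * x j i| ^ q ≤ ∑ i, |z i| ^ q) (i : Fin N) :
    ∑ j, |x j i| ^ q ≤ 1 := by
  have := hw (Pi.single i 1)
  have q0 : q ≠ 0 := by linarith
  simpa [Pi.single_apply, ite_mul, apply_ite, ite_pow, Real.zero_rpow q0] using this

theorem le_one_aux {k : ℕ} (q : ℝ) (hq : 1 ≤ q) (a : Fin k → ℝ) (C : ℝ) (hC : 0 ≤ C)
    (h : ∑ j, |a j| ^ q ≤ C ^ q) (j : Fin k) : |a j| ≤ C := by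
  have h1 : |a j| ^ q ≤ C ^ q :=
    (Finset.single_le_sum (f := fun j => |a j| ^ q)
      (fun j _ => Real.rpow_nonneg (abs_nonneg _) _) (Finset.mem_univ j)).trans h
  exact (Real.rpow_le_rpow_iff (abs_nonneg _) hC (by linarith)).1 h1

theorem w_aux {k N : ℕ} (q p : ℝ) (hq : 1 ≤ q) (hq2 : q < 2) (hqp : q ≤ p)
    (hb : 1 / q - 1 / p < 1 / 2) (hN : 0 < N)
    (x : Fin k → Fin N → ℝ)
    (hw : ∀ z : Fin N → ℝ, ∑ j, |∑ i, z i * x j i| ^ q ≤ ∑ i, |z i| ^ q) :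
    (∑ j, (∑ i, |x j i|) ^ p) ^ (1 / p) ≤
      (N : ℝ) ^ (1 - 2 * (1 / q - 1 / p) * (1 - 1 / q)) := by
  have q0 : 0 < q := by linarith
  have p0 : 0 < p := by linarith
  have hN' : (0 : ℝ) < N := by exact_mod_cast hN
  obtain ⟨b, hbdef⟩ : ∃ b, b = 1 / q - 1 / p := ⟨_, rfl⟩
  rw [← hbdef] at hb ⊢
  have hb0 : 0 ≤ b := by
    rw [hbdef, sub_nonneg]; exact one_div_le_one_div_of_le q0 hqp
  obtain ⟨s, hsdef⟩ : ∃ s, s = 1 / (1 / q - 1 / 2) := ⟨_, rfl⟩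
  have h9 : 0 < 1 / q - 1 / 2 := by
    rw [sub_pos]; exact one_div_lt_one_div_of_lt q0 hq2
  have hs0 : 0 < s := by rw [hsdef]; positivity
  have hs : 1 / s = 1 / q - 1 / 2 := by rw [hsdef]; simp
  set w : Fin k → ℝ := fun j => ∑ i, |x j i| with hwdef
  have w0 : ∀ j, 0 ≤ w j := fun j => Finset.sum_nonneg fun i _ => abs_nonneg _
  have B1 : ∑ j, w j ^ q ≤ (N : ℝ) ^ q := by
    calc ∑ j, w j ^ q ≤ ∑ j, (N : ℝ) ^ (q - 1) * ∑ i, |x j i| ^ q := by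
          refine Finset.sum_le_sum fun j _ => ?_
          simpa using Real.rpow_sum_le_const_mul_sum_rpow (Finset.univ : Finset (Fin N)) (x j) hq
      _ = (N : ℝ) ^ (q - 1) * ∑ i, ∑ j, |x j i| ^ q := by
          rw [← Finset.mul_sum, Finset.sum_comm]
      _ ≤ (N : ℝ) ^ (q - 1) * ∑ i : Fin N, (1 : ℝ) := by
          gcongr with i
          exact coord_aux q hq x hw i
      _ = (N : ℝ) ^ q := by
          simp only [Finset.sum_const, Finset.card_univ, Fintype.card_fin, nsmul_eq_mul, mul_one]
          rw [Real.rpow_sub_one hN'.ne']; field_simp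
  have B2 : ∑ j, w j ^ s ≤ (N : ℝ) ^ (s / q) := by
    calc ∑ j, w j ^ s ≤ ∑ j, (N : ℝ) ^ (s / 2) * √(∑ i, x j i ^ 2) ^ s := by
          refine Finset.sum_le_sum fun j _ => ?_
          have h1 : w j ≤ √N * √(∑ i, x j i ^ 2) := by
            rw [← Real.sqrt_mul (by positivity)]
            apply Real.le_sqrt_of_sq_le
            have := sq_sum_le_card_mul_sum_sq (s := (Finset.univ : Finset (Fin N))) (f := fun i => |x j i|)
            simpa using this
          refine (Real.rpow_le_rpow (w0 j) h1 hs0.le).trans (le_of_eq ?_)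
          rw [Real.mul_rpow (by positivity) (by positivity), Real.sqrt_eq_rpow,
            ← Real.rpow_mul (by positivity)]
          congr 2; ring
      _ = (N : ℝ) ^ (s / 2) * ∑ j, √(∑ i, x j i ^ 2) ^ s := by rw [Finset.mul_sum]
      _ ≤ (N : ℝ) ^ (s / 2) * N := by
          gcongr
          exact S_aux q s hq hq2 hs0 hs x hw
      _ = (N : ℝ) ^ (s / q) := by
          rw [← Real.rpow_add_one hN'.ne']
          congr 1
          have : s * (1 / s) = 1 := by field_simp
          rw [hs] at this
          rw [show s / q = s * (1 / q) by ring]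
          linarith
  obtain ⟨u, hu⟩ : ∃ u, u = p * (1 - 2 * b) / q := ⟨_, rfl⟩
  obtain ⟨v, hv⟩ : ∃ v, v = p * (2 * b) / s := ⟨_, rfl⟩
  have hu0 : 0 ≤ u := by rw [hu]; apply div_nonneg (mul_nonneg p0.le (by linarith)) q0.le
  have hv0 : 0 ≤ v := by rw [hv]; positivity
  have hqu : q * u = p * (1 - 2 * b) := by rw [hu]; field_simp
  have hsv : s * v = p * (2 * b) := by rw [hv]; field_simp
  have huv : u + v = 1 := by
    have e1 : u = p * (1 - 2 * b) * (1 / q) := by rw [hu]; ring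
    have e2 : v = p * (2 * b) * (1 / s) := by rw [hv]; ring
    rw [e1, e2, hs]
    have e3 : 1 / p = 1 / q - b := by rw [hbdef]; ring
    have e4 : p * (1 / p) = 1 := by field_simp
    rw [e3] at e4
    linear_combination e4
  have key : ∀ j, w j ^ p / (N : ℝ) ^ (p * (1 - 2 * b * (1 - 1 / q))) ≤
      u * (w j ^ q / (N : ℝ) ^ q) + v * (w j ^ s / (N : ℝ) ^ (s / q)) := by
    intro j
    have hq' := Real.rpow_nonneg (w0 j) q
    have hs' := Real.rpow_nonneg (w0 j) s
    refine le_trans (le_of_eq ?_) (Real.geom_mean_le_arith_mean2_weighted hu0 hv0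
      (p₁ := w j ^ q / (N : ℝ) ^ q) (p₂ := w j ^ s / (N : ℝ) ^ (s / q)) (by positivity) (by positivity) huv)
    rw [Real.div_rpow hq' (by positivity), Real.div_rpow hs' (by positivity),
      ← Real.rpow_mul (w0 j), ← Real.rpow_mul (w0 j), ← Real.rpow_mul hN'.le, ← Real.rpow_mul hN'.le,
      div_mul_div_comm, ← Real.rpow_add hN', ← Real.rpow_add_of_nonneg (w0 j)
      (by positivity) (by positivity)]
    have e1 : q * u + s * v = p := by rw [hqu, hsv]; ring
    have e2 : q * u + s / q * v = p * (1 - 2 * b * (1 - 1 / q)) := by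
      rw [show s / q * v = s * v * (1 / q) by ring, hqu, hsv]; ring
    rw [e1, e2]
  have hsum : (∑ j, w j ^ p) ≤ (N : ℝ) ^ (p * (1 - 2 * b * (1 - 1 / q))) := by
    have h1 : ∑ j, w j ^ p / (N : ℝ) ^ (p * (1 - 2 * b * (1 - 1 / q))) ≤ 1 := by
      calc _ ≤ ∑ j, (u * (w j ^ q / (N : ℝ) ^ q) + v * (w j ^ s / (N : ℝ) ^ (s / q))) :=
            Finset.sum_le_sum fun j _ => key j
        _ = u * ((∑ j, w j ^ q) / (N : ℝ) ^ q) + v * ((∑ j, w j ^ s) / (N : ℝ) ^ (s / q)) := by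
            rw [Finset.sum_add_distrib, ← Finset.mul_sum, ← Finset.mul_sum, Finset.sum_div,
              Finset.sum_div]
        _ ≤ u * 1 + v * 1 := by
            gcongr
            · rw [div_le_one (by positivity)]; exact B1
            · rw [div_le_one (by positivity)]; exact B2
        _ = 1 := by linarith
    rw [← Finset.sum_div, div_le_one (by positivity)] at h1
    exact h1
  refine (Real.rpow_le_rpow (Finset.sum_nonneg fun j _ => Real.rpow_nonneg (w0 j) _) hsum
    (by positivity)).trans (le_of_eq ?_)
  rw [← Real.rpow_mul hN'.le]
  congr 1; field_simp

theorem core_aux (q p : ℝ) (hq : 1 ≤ q) (hq2 : q ≠ 2) (hqp : q ≤ p)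
    (hb : 1 / q - 1 / p < 1 / 2) :
    ∃ β : ℝ, 0 ≤ β ∧ β < 1 / 2 ∧ ∀ (k N : ℕ) (_ : 0 < N) (μ : ℝ) (_ : 0 ≤ μ)
      (x : Fin k → Fin N → ℝ)
      (_ : ∀ z : Fin N → ℝ, ∑ j, |∑ i, z i * x j i| ^ q ≤ ∑ i, |z i| ^ q)
      (E : Fin N → Fin N → ℝ) (_ : ∀ i l, |E i l| ≤ μ) (y : Fin k → ℝ) (_ : ∀ j, 0 ≤ y j)
      (_ : ∀ j, ∃ i, y j ≤ |x j i + ∑ l, E i l * x j l|),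
      (∑ j, y j ^ p) ^ (1 / p) ≤
        (k : ℝ) ^ (1 / p) * (1 + μ * (N : ℝ) ^ β) + μ * (N : ℝ) ^ (1 / p + β) := by
  have q0 : 0 < q := by linarith
  have p0 : 0 < p := by linarith
  have hb0 : 0 ≤ 1 / q - 1 / p := by
    rw [sub_nonneg]; exact one_div_le_one_div_of_le q0 hqp
  rcases lt_or_gt_of_ne hq2 with h2 | h2
  · have ha : 1 / 2 < 1 / q := one_div_lt_one_div_of_lt q0 h2
    have ha1 : 1 / q ≤ 1 := by rw [div_le_one q0]; exact hq
    refine ⟨1 - 2 * (1 / q - 1 / p) * (1 - 1 / q) - 1 / p, ?_, ?_, ?_⟩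
    · nlinarith [mul_nonneg (sub_nonneg.2 ha1) (sub_nonneg.2 hb.le)]
    · nlinarith [mul_pos (sub_pos.2 ha) (sub_pos.2 hb)]
    · intro k N hN μ hμ x hw E hE y hy0 hy
      have hN' : (0 : ℝ) < N := by exact_mod_cast hN
      have hy1 : ∀ j, y j ≤ 1 + μ * ∑ i, |x j i| := by
        intro j
        obtain ⟨i, hi⟩ := hy j
        refine hi.trans ((abs_add_le _ _).trans (add_le_add ?_ ?_))
        · exact le_one_aux q hq (fun j => x j i) 1 zero_le_one
            (by simpa using coord_aux q hq x hw i) j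
        · refine (Finset.abs_sum_le_sum_abs _ _).trans ?_
          rw [Finset.mul_sum]
          refine Finset.sum_le_sum fun l _ => ?_
          rw [abs_mul]
          exact mul_le_mul_of_nonneg_right (hE i l) (abs_nonneg _)
      have w0 : ∀ j, 0 ≤ ∑ i, |x j i| := fun j => Finset.sum_nonneg fun i _ => abs_nonneg _
      calc (∑ j, y j ^ p) ^ (1 / p) ≤ (∑ j, (1 + μ * ∑ i, |x j i|) ^ p) ^ (1 / p) := by
            refine Real.rpow_le_rpow (Finset.sum_nonneg fun j _ => Real.rpow_nonneg (hy0 j) _) ?_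
              (by positivity)
            exact Finset.sum_le_sum fun j _ => Real.rpow_le_rpow (hy0 j) (hy1 j) p0.le
        _ ≤ (∑ j : Fin k, (1 : ℝ) ^ p) ^ (1 / p) + (∑ j, (μ * ∑ i, |x j i|) ^ p) ^ (1 / p) :=
            Real.Lp_add_le_of_nonneg _ (hq.trans hqp) (fun _ _ => zero_le_one)
              (fun j _ => mul_nonneg hμ (w0 j))
        _ = (k : ℝ) ^ (1 / p) + μ * (∑ j, (∑ i, |x j i|) ^ p) ^ (1 / p) := by
            congr 1
            · simp
            · simp_rw [fun j => Real.mul_rpow (z := p) hμ (w0 j)]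
              rw [← Finset.mul_sum, Real.mul_rpow (by positivity)
                (Finset.sum_nonneg fun j _ => Real.rpow_nonneg (w0 j) _), ← Real.rpow_mul hμ,
                mul_one_div_cancel p0.ne', Real.rpow_one]
        _ ≤ (k : ℝ) ^ (1 / p) * (1 + μ * _) + μ * _ := by
            gcongr
            · refine le_mul_of_one_le_right (by positivity) ?_
              have : 0 ≤ μ * (N : ℝ) ^ (1 - 2 * (1 / q - 1 / p) * (1 - 1 / q) - 1 / p) := by
                positivity
              linarith
            · convert w_aux q p hq h2 hqp hb hN x hw using 2
              congr 1
              ring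
  · refine ⟨1 / q, by positivity, one_div_lt_one_div_of_lt (by norm_num) h2, ?_⟩
    intro k N hN μ hμ x hw E hE y hy0 hy
    have hN' : (0 : ℝ) < N := by exact_mod_cast hN
    have hM : 0 ≤ μ * (N : ℝ) ^ (1 / q) := by positivity
    have hy1 : ∀ j, y j ≤ 1 + μ * (N : ℝ) ^ (1 / q) := by
      intro j
      obtain ⟨i, hi⟩ := hy j
      refine hi.trans ((abs_add_le _ _).trans (add_le_add ?_ ?_))
      · exact le_one_aux q hq (fun j => x j i) 1 zero_le_one
          (by simpa using coord_aux q hq x hw i) j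
      · refine le_one_aux q hq (fun j => ∑ l, E i l * x j l) _ hM ((hw (E i)).trans ?_) j
        rw [Real.mul_rpow hμ (by positivity), ← Real.rpow_mul hN'.le, one_div_mul_cancel q0.ne',
          Real.rpow_one]
        calc ∑ l, |E i l| ^ q ≤ ∑ l : Fin N, μ ^ q :=
              Finset.sum_le_sum fun l _ => Real.rpow_le_rpow (abs_nonneg _) (hE i l) q0.le
          _ = _ := by simp [mul_comm]
    calc (∑ j, y j ^ p) ^ (1 / p) ≤ (∑ j : Fin k, (1 + μ * (N : ℝ) ^ (1 / q)) ^ p) ^ (1 / p) := by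
          refine Real.rpow_le_rpow (Finset.sum_nonneg fun j _ => Real.rpow_nonneg (hy0 j) _) ?_
            (by positivity)
          exact Finset.sum_le_sum fun j _ => Real.rpow_le_rpow (hy0 j) (hy1 j) p0.le
      _ = (k : ℝ) ^ (1 / p) * (1 + μ * (N : ℝ) ^ (1 / q)) := by
          simp only [Finset.sum_const, Finset.card_univ, Fintype.card_fin, nsmul_eq_mul]
          rw [Real.mul_rpow (by positivity) (by positivity), ← Real.rpow_mul (by positivity),
            mul_one_div_cancel p0.ne', Real.rpow_one]
      _ ≤ _ := by
          have : 0 ≤ μ * (N : ℝ) ^ (1 / p + 1 / q) := by positivity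
          linarith

/-- Quadratic polynomials over a prime field give an almost orthogonal family. -/
theorem family_aux (ℓ : ℕ) (hℓ : ℓ.Prime) (N : ℕ) (hN : N ≤ ℓ ^ 3) :
    ∃ V : Fin N → (ZMod ℓ × ZMod ℓ) → ℝ,
      haveI : Fact ℓ.Prime := ⟨hℓ⟩
      (∀ i, ∑ a, V i a * V i a = ℓ) ∧ ∀ i j, i ≠ j → |∑ a, V i a * V j a| ≤ 2 := by
  have : Fact ℓ.Prime := ⟨hℓ⟩
  have hcard : Fintype.card (Fin N) ≤ Fintype.card (ZMod ℓ × ZMod ℓ × ZMod ℓ) := by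
    simp only [Fintype.card_fin, Fintype.card_prod, ZMod.card]
    calc N ≤ ℓ ^ 3 := hN
      _ = ℓ * (ℓ * ℓ) := by ring
  obtain ⟨φ⟩ := Function.Embedding.nonempty_of_card_le hcard
  let f : Fin N → ZMod ℓ → ZMod ℓ := fun i t => (φ i).1 + (φ i).2.1 * t + (φ i).2.2 * t ^ 2
  have hin : ∀ i j, (∑ a : ZMod ℓ × ZMod ℓ, (if f i a.1 = a.2 then (1:ℝ) else 0) *
      (if f j a.1 = a.2 then (1:ℝ) else 0)) =
      ((Finset.univ.filter fun t => f i t = f j t).card : ℝ) := by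
    intro i j
    rw [Fintype.sum_prod_type]
    simp only [ite_mul, one_mul, zero_mul, Finset.sum_ite_eq, Finset.mem_univ, if_true]
    rw [Finset.card_filter]
    push_cast
    refine Finset.sum_congr rfl fun t _ => ?_
    simp only [eq_comm]
  refine ⟨fun i a => if f i a.1 = a.2 then 1 else 0, ?_, ?_⟩
  · intro i
    rw [hin i i]
    simp [ZMod.card]
  · intro i j hij
    rw [hin i j, abs_of_nonneg (by positivity)]
    let P : Polynomial (ZMod ℓ) := Polynomial.C ((φ i).2.2 - (φ j).2.2) * Polynomial.X ^ 2 +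
      Polynomial.C ((φ i).2.1 - (φ j).2.1) * Polynomial.X + Polynomial.C ((φ i).1 - (φ j).1)
    have hP : P ≠ 0 := by
      intro h0
      apply hij
      apply φ.injective
      have c0 := congrArg (fun Q => Polynomial.coeff Q 0) h0
      have c1 := congrArg (fun Q => Polynomial.coeff Q 1) h0
      have c2 := congrArg (fun Q => Polynomial.coeff Q 2) h0
      simp only [P, Polynomial.coeff_add, Polynomial.coeff_C_mul, Polynomial.coeff_X_pow,
        Polynomial.coeff_X, Polynomial.coeff_C, Polynomial.coeff_zero] at c0 c1 c2
      norm_num at c0 c1 c2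
      refine Prod.ext ?_ (Prod.ext ?_ ?_)
      · exact sub_eq_zero.1 c0
      · exact sub_eq_zero.1 c1
      · exact sub_eq_zero.1 c2
    have hdeg : P.natDegree ≤ 2 := Polynomial.natDegree_quadratic_le
    have hsub : (Finset.univ.filter fun t => f i t = f j t) ⊆ P.roots.toFinset := by
      intro t ht
      simp only [Finset.mem_filter, Finset.mem_univ, true_and] at ht
      rw [Multiset.mem_toFinset, Polynomial.mem_roots hP, Polynomial.IsRoot.def]
      simp only [P, Polynomial.eval_add, Polynomial.eval_mul, Polynomial.eval_C, Polynomial.eval_pow,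
        Polynomial.eval_X]
      simp only [f] at ht
      linear_combination ht
    have h1 := (Finset.card_le_card hsub).trans ((Multiset.toFinset_card_le _).trans
      ((Polynomial.card_roots' P).trans hdeg))
    exact_mod_cast h1

/-- The dual of `ℓ_q^N`, with its coordinates. -/
theorem space_aux (q : ℝ≥0∞) (hq : 1 ≤ q) (hqt : q ≠ ∞) (N : ℕ) :
    ∃ (X : Type u) (_ : NormedAddCommGroup X) (_ : NormedSpace ℝ X) (_ : CompleteSpace X)
      (e : Fin N → X) (φ : Fin N → X →L[ℝ] ℝ),
      (∀ i j, φ i (e j) = if i = j then 1 else 0) ∧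
      (∀ f : X →L[ℝ] ℝ, ‖f‖ ≤ 1 → ∑ i, |f (e i)| ^ q.toReal ≤ 1) ∧
      (∀ z : Fin N → ℝ, ‖∑ i, z i • φ i‖ ≤ (∑ i, |z i| ^ q.toReal) ^ (1 / q.toReal)) := by
  have : Fact (1 ≤ q) := ⟨hq⟩
  have hq1 : 1 ≤ q.toReal := by
    rw [← ENNReal.toReal_one]; exact ENNReal.toReal_mono hqt hq
  have q0 : 0 < q.toReal := by linarith
  let F := PiLp q (fun _ : ULift.{u} (Fin N) => ℝ)
  have hnorm : ∀ z : F, ‖z‖ = (∑ i : Fin N, |z (ULift.up i)| ^ q.toReal) ^ (1 / q.toReal) := by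
    intro z
    rw [PiLp.norm_eq_sum q0]
    congr 1
    exact Fintype.sum_equiv Equiv.ulift _ _ (fun i => by simp [Equiv.ulift])
  let e : Fin N → (F →L[ℝ] ℝ) := fun i => PiLp.proj q (fun _ : ULift.{u} (Fin N) => ℝ) (ULift.up i)
  let b : Fin N → F := fun i => WithLp.toLp q (Pi.single (ULift.up i) 1)
  have hbv : ∀ i j, (b i) (ULift.up j) = if i = j then (1 : ℝ) else 0 := by
    intro i j
    simp only [b, Pi.single_apply, ULift.up_inj, eq_comm]
  let φ : Fin N → (F →L[ℝ] ℝ) →L[ℝ] ℝ := fun i => ContinuousLinearMap.apply ℝ ℝ (b i)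
  refine ⟨F →L[ℝ] ℝ, inferInstance, inferInstance, inferInstance, e, φ, ?_, ?_, ?_⟩
  · intro i j
    exact hbv i j
  · intro f hf
    set S := ∑ i, |f (e i)| ^ q.toReal with hS
    have hS0 : 0 ≤ S := Finset.sum_nonneg fun j _ => Real.rpow_nonneg (abs_nonneg _) _
    rcases hS0.eq_or_lt with h | hSp
    · rw [← h]; exact zero_le_one
    let g : F →L[ℝ] ℝ := ∑ i, (SignType.sign (f (e i)) * (|f (e i)| ^ q.toReal) ^ (1 - 1 / q.toReal)) • e i
    have hg : ‖g‖ ≤ S ^ (1 - 1 / q.toReal) := by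
      refine ContinuousLinearMap.opNorm_le_bound _ (Real.rpow_nonneg hS0 _) fun z => ?_
      rw [hnorm]
      refine le_trans ?_ (hol_aux Finset.univ q.toReal hq1 (fun i => |f (e i)| ^ q.toReal)
        (fun i => |z (ULift.up i)|) (fun j => Real.rpow_nonneg (abs_nonneg _) _)
        (fun j => abs_nonneg _))
      simp only [g, sum_apply, smul_apply, smul_eq_mul,
        Real.norm_eq_abs]
      refine (Finset.abs_sum_le_sum_abs _ _).trans (Finset.sum_le_sum fun i _ => ?_)
      rw [abs_mul, abs_mul, abs_of_nonneg (Real.rpow_nonneg (Real.rpow_nonneg (abs_nonneg _) _) _)]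
      have h1 : |((SignType.sign (f (e i)) : SignType) : ℝ)| ≤ 1 := by
        rcases lt_trichotomy (f (e i)) 0 with h | h | h <;> simp [h]
      have h2 : e i z = z (ULift.up i) := rfl
      rw [h2]
      refine mul_le_mul_of_nonneg_right ?_ (abs_nonneg _)
      exact mul_le_of_le_one_left (Real.rpow_nonneg (Real.rpow_nonneg (abs_nonneg _) _) _) h1
    have hfg : f g = S := by
      simp only [g, map_sum, map_smul, smul_eq_mul, hS]
      refine Finset.sum_congr rfl fun i _ => ?_
      rcases eq_or_ne (f (e i)) 0 with h | h
      · simp [h, Real.zero_rpow q0.ne']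
      · have ha : 0 < |f (e i)| := abs_pos.2 h
        rw [mul_right_comm, sign_mul_self, ← Real.rpow_mul ha.le]
        conv_lhs => enter [1]; rw [← Real.rpow_one (|f (e i)|)]
        rw [← Real.rpow_add ha]
        congr 1; field_simp; ring
    have h3 : S ≤ S ^ (1 - 1 / q.toReal) := by
      calc S = f g := hfg.symm
        _ ≤ ‖f g‖ := Real.le_norm_self _
        _ ≤ ‖f‖ * ‖g‖ := f.le_opNorm g
        _ ≤ 1 * S ^ (1 - 1 / q.toReal) := by gcongr
        _ = _ := one_mul _
    by_contra hcon
    push Not at hcon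
    have h5 : S ^ (1 - 1 / q.toReal) < S := by
      conv_rhs => rw [← Real.rpow_one S]
      exact Real.rpow_lt_rpow_of_exponent_lt hcon (by
        have : 0 < 1 / q.toReal := by positivity
        linarith)
    linarith
  · intro z
    have hz : ∑ i, z i • φ i = ContinuousLinearMap.apply ℝ ℝ
        (WithLp.toLp q (fun i : ULift.{u} (Fin N) => z i.down) : F) := by
      have : (WithLp.toLp q (fun i : ULift.{u} (Fin N) => z i.down) : F) = ∑ i, z i • b i := by
        ext i
        have h1 : ∀ i' : Fin N, (∑ i, z i • b i) (ULift.up i') = ∑ i, z i * b i (ULift.up i') := by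
          intro i'
          change e i' (∑ i, z i • b i) = _
          rw [map_sum]
          refine Finset.sum_congr rfl fun i _ => ?_
          rw [map_smul]
          rfl
        have h2 := h1 i.down
        simp only [hbv] at h2
        refine Eq.trans ?_ h2.symm
        simp
      rw [this]
      simp only [φ, map_sum, map_smul]
    rw [hz]
    refine ContinuousLinearMap.opNorm_le_bound _ (Real.rpow_nonneg
      (Finset.sum_nonneg fun j _ => Real.rpow_nonneg (abs_nonneg _) _) _) fun g => ?_
    rw [ContinuousLinearMap.apply_apply, mul_comm]
    refine (g.le_opNorm _).trans ?_
    rw [hnorm]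

theorem eSum_aux (p : ℝ≥0∞) (hp : p ≠ ∞) {k : ℕ} (y : Fin k → ℝ) (hy : ∀ j, 0 ≤ y j) :
    eSum p (fun j => ENNReal.ofReal (y j)) =
      ENNReal.ofReal ((∑ j, y j ^ p.toReal) ^ (1 / p.toReal)) := by
  rw [eSum, if_neg hp]
  rw [← ENNReal.ofReal_rpow_of_nonneg
    (Finset.sum_nonneg fun j _ => Real.rpow_nonneg (hy j) _) (by positivity),
    ENNReal.ofReal_sum_of_nonneg (fun j _ => Real.rpow_nonneg (hy j) _)]
  congr 1
  refine Finset.sum_congr rfl fun j _ => ?_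
  rw [ENNReal.ofReal_rpow_of_nonneg (hy j) ENNReal.toReal_nonneg]

theorem weak_aux (q : ℝ≥0∞) (hq : q ≠ ∞) (q0 : 0 < q.toReal) {X : Type*} [NormedAddCommGroup X]
    [NormedSpace ℝ X] {n : ℕ} (x : Fin n → X) :
    weakLq q x ≤ 1 ↔ ∀ f : X →L[ℝ] ℝ, ‖f‖ ≤ 1 → ∑ j, |f (x j)| ^ q.toReal ≤ 1 := by
  rw [weakLq, iSup_le_iff, Subtype.forall]
  refine forall_congr' fun f => forall_congr' fun hf => ?_
  rw [eSum_aux q hq _ (fun j => abs_nonneg _), ENNReal.ofReal_le_one]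
  have h0 : 0 ≤ ∑ j, |f (x j)| ^ q.toReal :=
    Finset.sum_nonneg fun j _ => Real.rpow_nonneg (abs_nonneg _) _
  constructor
  · intro h
    have := Real.rpow_le_rpow (Real.rpow_nonneg h0 _) h q0.le
    rwa [← Real.rpow_mul h0, one_div_mul_cancel q0.ne', Real.rpow_one, Real.one_rpow] at this
  · intro h
    exact Real.rpow_le_one h0 h (by positivity)

theorem op_aux (q p : ℝ≥0∞) (hq : 1 ≤ q) (hqp : q ≤ p) (hp : p < ∞) (hq2 : q ≠ 2)
    (hb : 1 / q.toReal - 1 / p.toReal < 1 / 2) :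
    ∃ β : ℝ, 0 ≤ β ∧ β < 1 / 2 ∧ ∀ (c : ℝ≥0) (k : ℕ → ℕ)
        (_ : ∀ (X : Type u) (Y : Type v) [NormedAddCommGroup X] [NormedSpace ℝ X] [CompleteSpace X]
          [NormedAddCommGroup Y] [NormedSpace ℝ Y] [CompleteSpace Y]
          (n : ℕ) (T : X →L[ℝ] Y), RankLE T n →
            piPQ p q T ≤ (c : ℝ≥0∞) * piN p q (k n) T)
        (n N : ℕ) (_ : 0 < N) (κ : Type) [Fintype κ] (_ : Fintype.card κ ≤ n)
        (V : Fin N → κ → ℝ) (W : κ → Fin N → ℝ) (μ : ℝ) (_ : 0 ≤ μ)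
        (_ : ∀ i, ∑ a, V i a * W a i = 1)
        (_ : ∀ i j, i ≠ j → |∑ a, V i a * W a j| ≤ μ),
        (N : ℝ) ^ (1 / p.toReal) ≤ c * ((k n : ℝ) ^ (1 / p.toReal) * (1 + μ * (N : ℝ) ^ β) +
          μ * (N : ℝ) ^ (1 / p.toReal + β)) := by
  have hqt : q ≠ ∞ := (hqp.trans_lt hp).ne
  have hq1 : 1 ≤ q.toReal := by
    rw [← ENNReal.toReal_one]; exact ENNReal.toReal_mono hqt hq
  have q0 : 0 < q.toReal := by linarith
  have hqp' : q.toReal ≤ p.toReal := ENNReal.toReal_mono hp.ne hqp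
  have p0 : 0 < p.toReal := by linarith
  have hq2' : q.toReal ≠ 2 := by
    intro h
    apply hq2
    rw [← ENNReal.ofReal_toReal hqt, h]
    simp
  obtain ⟨β, hβ0, hβ1, hcore⟩ := core_aux q.toReal p.toReal hq1 hq2' hqp' hb
  refine ⟨β, hβ0, hβ1, ?_⟩
  intro c k hyp n N hN κ _ hκ V W μ hμ hdiag hoff
  obtain ⟨X, _, _, _, e, φ, he1, he2, he3⟩ := space_aux.{u} q hq hqt N
  let G : Fin N → Fin N → ℝ := fun i j => ∑ a, V i a * W a j
  let T : X →L[ℝ] (ULift.{v} (Fin N) → ℝ) :=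
    ContinuousLinearMap.pi (fun i => ∑ j, G i.down j • φ j)
  have hT : ∀ x i, T x i = ∑ j, G i.down j * φ j x := by
    intro x i
    simp [T, sum_apply, smul_apply]
  have hrank : RankLE T n := by
    refine ⟨inferInstance, ?_⟩
    let B : (κ → ℝ) →ₗ[ℝ] (ULift.{v} (Fin N) → ℝ) :=
      LinearMap.pi (fun i => ∑ a, V i.down a • LinearMap.proj a)
    have hB : ∀ y i, B y i = ∑ a, V i.down a * y a := by
      intro y i
      simp [B]
    have hle : LinearMap.range (T : X →ₗ[ℝ] (ULift.{v} (Fin N) → ℝ)) ≤ LinearMap.range B := by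
      rintro _ ⟨x, rfl⟩
      refine ⟨fun a => ∑ j, W a j * φ j x, ?_⟩
      funext i
      rw [hB]
      change _ = T x i
      rw [hT]
      simp only [G, Finset.mul_sum, Finset.sum_mul]
      rw [Finset.sum_comm]
      refine Finset.sum_congr rfl fun j _ => Finset.sum_congr rfl fun a _ => ?_
      ring
    calc _ ≤ _ := Submodule.finrank_mono hle
      _ ≤ _ := LinearMap.finrank_range_le B
      _ = Fintype.card κ := Module.finrank_fintype_fun_eq_card ℝ
      _ ≤ n := hκ
  have hlow : ENNReal.ofReal ((N : ℝ) ^ (1 / p.toReal)) ≤ piPQ p q T := by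
    refine le_iSup_of_le N ?_
    refine le_iSup_of_le ⟨e, (weak_aux q hqt q0 e).2 he2⟩ ?_
    rw [eSum_aux p hp.ne _ (fun j => norm_nonneg _)]
    refine ENNReal.ofReal_le_ofReal (Real.rpow_le_rpow (by positivity) ?_ (by positivity))
    calc (N : ℝ) = ∑ j : Fin N, (1 : ℝ) := by simp
      _ ≤ _ := by
        refine Finset.sum_le_sum fun j _ => ?_
        refine Real.one_le_rpow ?_ p0.le
        refine le_trans (le_of_eq ?_) (norm_le_pi_norm _ (ULift.up j))
        rw [hT]
        simp only [he1]
        simp [G, hdiag]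
  have hup : piN p q (k n) T ≤ ENNReal.ofReal ((k n : ℝ) ^ (1 / p.toReal) * (1 + μ * (N : ℝ) ^ β) +
          μ * (N : ℝ) ^ (1 / p.toReal + β)) := by
    refine iSup_le fun x => ?_
    obtain ⟨x, hx⟩ := x
    rw [weak_aux q hqt q0] at hx
    rw [eSum_aux p hp.ne _ (fun j => norm_nonneg _)]
    refine ENNReal.ofReal_le_ofReal ?_
    refine hcore (k n) N hN μ hμ (fun j i => φ i (x j)) ?_ (fun i l => if i = l then 0 else G i l) ?_ _
      (fun j => norm_nonneg _) ?_
    · intro z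
      have hfx : ∀ j, ∑ i, z i * φ i (x j) = (∑ i, z i • φ i) (x j) := by
        intro j
        simp [sum_apply, smul_apply]
      simp only [hfx]
      have hz := he3 z
      set f := ∑ i, z i • φ i with hf
      have h0 : 0 ≤ ∑ i, |z i| ^ q.toReal :=
        Finset.sum_nonneg fun j _ => Real.rpow_nonneg (abs_nonneg _) _
      rcases (norm_nonneg f).eq_or_lt with h | h
      · have : f = 0 := norm_eq_zero.1 h.symm
        rw [this]
        simpa [Real.zero_rpow q0.ne'] using h0
      · have h1 := hx (‖f‖⁻¹ • f) (by
          rw [norm_smul, norm_inv, norm_norm, inv_mul_cancel₀ h.ne'])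
        have h2 : ∑ j, |f (x j)| ^ q.toReal ≤ ‖f‖ ^ q.toReal := by
          have h3 : ∀ j, |(‖f‖⁻¹ • f) (x j)| ^ q.toReal = |f (x j)| ^ q.toReal / ‖f‖ ^ q.toReal := by
            intro j
            rw [smul_apply, smul_eq_mul, abs_mul, abs_of_nonneg (by positivity),
              ← Real.div_rpow (abs_nonneg _) h.le]
            congr 1
            rw [div_eq_inv_mul]
          simp only [h3] at h1
          rwa [← Finset.sum_div, div_le_one (Real.rpow_pos_of_pos h _)] at h1
        refine h2.trans ((Real.rpow_le_rpow h.le hz q0.le).trans (le_of_eq ?_))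
        rw [← Real.rpow_mul h0, one_div_mul_cancel q0.ne', Real.rpow_one]
    · intro i l
      split_ifs with h
      · simpa using hμ
      · exact hoff i l h
    · intro j
      have hEq : ∀ i : Fin N, φ i (x j) + ∑ l, (if i = l then 0 else G i l) * φ l (x j) =
          T (x j) (ULift.up i) := by
        intro i
        rw [hT, ← Finset.add_sum_erase _ _ (Finset.mem_univ i),
          ← Finset.add_sum_erase (f := fun l => G i l * φ l (x j)) _ (Finset.mem_univ i)]
        have hd : G i i = 1 := hdiag i
        simp only [if_true, hd, one_mul, zero_mul, zero_add]
        congr 1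
        refine Finset.sum_congr rfl fun l hl => ?_
        rw [if_neg (Finset.ne_of_mem_erase hl).symm]
      simp only [hEq]
      by_contra hcon
      push Not at hcon
      have hpos : 0 < ‖T (x j)‖ := lt_of_le_of_lt (abs_nonneg _) (hcon ⟨0, hN⟩)
      have := (pi_norm_lt_iff (x := T (x j)) hpos).2 (fun i : ULift.{v} (Fin N) => hcon i.down)
      exact lt_irrefl _ this
  have hfin := (hlow.trans (hyp X _ n T hrank)).trans (mul_le_mul_right hup _)
  rw [← ENNReal.ofReal_coe_nnreal, ← ENNReal.ofReal_mul c.coe_nonneg] at hfin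
  exact (ENNReal.ofReal_le_ofReal_iff (by positivity)).1 hfin

theorem prime_aux (n : ℕ) (hn : 4 ≤ n) : ∃ ℓ : ℕ, ℓ.Prime ∧ ℓ ^ 2 ≤ n ∧ n ≤ 4 * ℓ ^ 2 := by
  have h2 : 2 ≤ Nat.sqrt n := Nat.le_sqrt.2 (by omega)
  obtain ⟨ℓ, h1, h3, h4⟩ := Nat.exists_prime_lt_and_le_two_mul (Nat.sqrt n / 2) (by omega)
  refine ⟨ℓ, h1, ?_, ?_⟩
  · have : ℓ ≤ Nat.sqrt n := by omega
    calc ℓ ^ 2 ≤ Nat.sqrt n ^ 2 := Nat.pow_le_pow_left this 2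
      _ ≤ n := Nat.sqrt_le' n
  · have : Nat.sqrt n + 1 ≤ 2 * ℓ := by omega
    calc n ≤ (Nat.sqrt n + 1) ^ 2 := (Nat.lt_succ_sqrt' n).le
      _ ≤ (2 * ℓ) ^ 2 := Nat.pow_le_pow_left this 2
      _ = 4 * ℓ ^ 2 := by ring

/-- for `1 ≤ q ≤ p < ∞` with `1/q = 1/p + 1/r` (`q ≤ r ≤ ∞`),
`q ≠ 2` and `2 < r ≤ ∞`, there is `α > 1` such that any sequence `k_n` for which
`π_{p,q}(T) ≤ c · π_{p,q}^{k_n}(T)` holds for all rank-`n` operators must satisfy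
`n^α ≤ c̄ · k_n`. -/
theorem statement5 (q p r : ℝ≥0∞) (hq : 1 ≤ q) (hqp : q ≤ p) (hp : p < ∞)
    (hqr : q ≤ r) (hr : 1 / q = 1 / p + 1 / r) (hq2 : q ≠ 2) (hr2 : 2 < r) :
    ∃ α : ℝ, 1 < α ∧
      ∀ (c : ℝ≥0), 0 < c → ∀ k : ℕ → ℕ,
        (∀ (X Y : Type*) [NormedAddCommGroup X] [NormedSpace ℝ X] [CompleteSpace X]
          [NormedAddCommGroup Y] [NormedSpace ℝ Y] [CompleteSpace Y]
          (n : ℕ) (T : X →L[ℝ] Y), RankLE T n →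
            piPQ p q T ≤ (c : ℝ≥0∞) * piN p q (k n) T) →
        ∃ cbar : ℝ, ∀ n : ℕ, (n : ℝ) ^ α ≤ cbar * k n := by
  have hqt : q ≠ ∞ := (hqp.trans_lt hp).ne
  have hq1 : 1 ≤ q.toReal := by
    rw [← ENNReal.toReal_one]; exact ENNReal.toReal_mono hqt hq
  have hqp' : q.toReal ≤ p.toReal := ENNReal.toReal_mono hp.ne hqp
  have p0 : 0 < p.toReal := by linarith
  have hb : 1 / q.toReal - 1 / p.toReal < 1 / 2 := by
    have hp0 : p ≠ 0 := by
      intro h; rw [h] at p0; simp at p0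
    have hr0 : r ≠ 0 := by
      intro h; rw [h] at hr2; simp at hr2
    have h1 := congrArg ENNReal.toReal hr
    simp only [one_div] at h1
    rw [ENNReal.toReal_add (by simpa using hp0) (by simpa using hr0)] at h1
    simp only [ENNReal.toReal_inv] at h1
    simp only [one_div]
    have h2 : r.toReal⁻¹ < 2⁻¹ := by
      rw [← ENNReal.toReal_inv]
      have h3 : r⁻¹ < 2⁻¹ := ENNReal.inv_lt_inv.2 hr2
      have h4 := (ENNReal.toReal_lt_toReal (by simpa using hr0) (by simp)).2 h3
      simpa using h4
    linarith
  obtain ⟨β, hβ0, hβ1, hop⟩ := op_aux q p hq hqp hp hq2 hb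
  obtain ⟨α, hα⟩ : ∃ α : ℝ, α = 1 + (1 / 2 - β) / 2 := ⟨_, rfl⟩
  have hα1 : 1 < α := by linarith
  have hα2 : α < 3 / 2 := by linarith
  have hαβ : α * β < 1 / 2 := by rw [hα]; nlinarith
  refine ⟨α, hα1, ?_⟩
  intro c hc k hyp
  have hc' : (0 : ℝ) < c := by exact_mod_cast hc
  have hop' := hop c k hyp
  obtain ⟨ε, hε⟩ : ∃ ε : ℝ, ε = min 1 (1 / (2 * c)) := ⟨_, rfl⟩
  have hε0 : 0 < ε := by rw [hε]; positivity
  have hε1 : ε ≤ 1 := by rw [hε]; exact min_le_left _ _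
  have hε2 : c * ε ≤ 1 / 2 := by
    have : ε ≤ 1 / (2 * c) := by rw [hε]; exact min_le_right _ _
    calc c * ε ≤ c * (1 / (2 * c)) := by gcongr
      _ = 1 / 2 := by field_simp
  have F1 : ∀ᶠ n : ℕ in Filter.atTop, (n : ℝ) ^ (-(1 / 2 - α * β)) < ε / 8 :=
    ((tendsto_rpow_neg_atTop (by linarith)).comp tendsto_natCast_atTop_atTop).eventually
      (gt_mem_nhds (by positivity))
  have F2 : ∀ᶠ n : ℕ in Filter.atTop, 16 ≤ (n : ℝ) ^ (3 / 2 - α) :=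
    ((tendsto_rpow_atTop (by linarith)).comp tendsto_natCast_atTop_atTop).eventually
      (Filter.eventually_ge_atTop 16)
  obtain ⟨n0, hn0⟩ := Filter.eventually_atTop.1 (F1.and (F2.and (Filter.eventually_ge_atTop 4)))
  have hk1 : ∀ n, 1 ≤ n → 1 ≤ k n := by
    intro n hn
    have := hop' n 1 one_pos Unit (by simpa using hn) (fun _ _ => 1) (fun _ _ => 1) 0 le_rfl
      (by simp) (by intro i j hij; exact absurd (Subsingleton.elim i j) hij)
    by_contra hk
    have hk0 : k n = 0 := by omega
    rw [hk0] at this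
    simp only [Nat.cast_zero, Nat.cast_one, Real.one_rpow, zero_mul, add_zero] at this
    rw [Real.zero_rpow (by positivity)] at this
    simp at this
    linarith
  refine ⟨(4 * c) ^ p.toReal + (n0 : ℝ) ^ α, ?_⟩
  intro n
  rcases Nat.eq_zero_or_pos n with rfl | hnpos
  · simp only [Nat.cast_zero]
    rw [Real.zero_rpow (by linarith)]
    positivity
  have hkn : (1 : ℝ) ≤ k n := by exact_mod_cast hk1 n hnpos
  rcases lt_or_ge n n0 with hlt | hge
  · have h1 : (n : ℝ) ^ α ≤ (n0 : ℝ) ^ α :=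
      Real.rpow_le_rpow (by positivity) (by exact_mod_cast hlt.le) (by linarith)
    have h2 : 0 ≤ (4 * (c : ℝ)) ^ p.toReal := by positivity
    have h3 : 0 ≤ (n0 : ℝ) ^ α := by positivity
    nlinarith
  obtain ⟨G1, G2, G3⟩ := hn0 n hge
  obtain ⟨ℓ, hℓ, hℓ1, hℓ2⟩ := prime_aux n G3
  have hn' : (0 : ℝ) < n := by exact_mod_cast hnpos
  have hn1 : (1 : ℝ) ≤ n := by exact_mod_cast hnpos
  have hℓ0 : (0 : ℝ) < ℓ := by exact_mod_cast hℓ.pos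
  have hna : 1 ≤ (n : ℝ) ^ α := Real.one_le_rpow hn1 (by linarith)
  have hsq : (n : ℝ) ^ (1 / 2 : ℝ) ≤ 2 * ℓ := by
    rw [← Real.sqrt_eq_rpow]
    apply Real.sqrt_le_iff.2
    refine ⟨by positivity, ?_⟩
    have : (n : ℝ) ≤ 4 * (ℓ : ℝ) ^ 2 := by exact_mod_cast hℓ2
    linarith
  obtain ⟨N, hNdef⟩ : ∃ N, N = ⌈(n : ℝ) ^ α⌉₊ := ⟨_, rfl⟩
  have hN1 : (n : ℝ) ^ α ≤ N := by rw [hNdef]; exact Nat.le_ceil _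
  have hN2 : (N : ℝ) ≤ 2 * (n : ℝ) ^ α := by
    have : (N : ℝ) < (n : ℝ) ^ α + 1 := by rw [hNdef]; exact Nat.ceil_lt_add_one (by positivity)
    linarith
  have hN0' : (0 : ℝ) < N := by linarith
  have hN0 : 0 < N := by exact_mod_cast hN0'
  have hN3 : N ≤ ℓ ^ 3 := by
    have h1 : (n : ℝ) ^ (3 / 2 : ℝ) ≤ 8 * (ℓ : ℝ) ^ 3 := by
      calc (n : ℝ) ^ (3 / 2 : ℝ) = ((n : ℝ) ^ (1 / 2 : ℝ)) ^ 3 := by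
            rw [← Real.rpow_natCast, ← Real.rpow_mul hn'.le]; norm_num
        _ ≤ (2 * (ℓ : ℝ)) ^ 3 := by gcongr
        _ = _ := by ring
    have h2 : 16 * (n : ℝ) ^ α ≤ (n : ℝ) ^ (3 / 2 : ℝ) := by
      calc 16 * (n : ℝ) ^ α ≤ (n : ℝ) ^ (3 / 2 - α) * (n : ℝ) ^ α := by gcongr
        _ = _ := by rw [← Real.rpow_add hn']; congr 1; ring
    have h3 : (N : ℝ) ≤ (ℓ : ℝ) ^ 3 := by linarith
    exact_mod_cast h3
  obtain ⟨V, hV1, hV2⟩ := family_aux ℓ hℓ N hN3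
  have : Fact ℓ.Prime := ⟨hℓ⟩
  have hres := hop' n N hN0 (ZMod ℓ × ZMod ℓ)
    (by simp only [Fintype.card_prod, ZMod.card]; linarith [sq ℓ])
    V (fun a i => V i a / ℓ) (2 / ℓ) (by positivity)
    (by
      intro i
      simp only [← mul_div_assoc]
      rw [← Finset.sum_div, hV1 i, div_self hℓ0.ne'])
    (by
      intro i j hij
      simp only [← mul_div_assoc]
      rw [← Finset.sum_div, abs_div, abs_of_pos hℓ0]
      gcongr
      exact hV2 i j hij)
  obtain ⟨δ, hδ⟩ : ∃ δ : ℝ, δ = 2 / ℓ * (N : ℝ) ^ β := ⟨_, rfl⟩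
  have hδε : δ ≤ ε := by
    have h1 : (2 : ℝ) / ℓ ≤ 4 * (n : ℝ) ^ (-(1 / 2) : ℝ) := by
      rw [Real.rpow_neg hn'.le, ← div_eq_mul_inv, div_le_div_iff₀ hℓ0 (by positivity)]
      linarith
    have h2 : (N : ℝ) ^ β ≤ 2 * (n : ℝ) ^ (α * β) := by
      calc (N : ℝ) ^ β ≤ (2 * (n : ℝ) ^ α) ^ β := by gcongr
        _ = 2 ^ β * (n : ℝ) ^ (α * β) := by
            rw [Real.mul_rpow (by norm_num) (by positivity), ← Real.rpow_mul hn'.le]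
        _ ≤ 2 * (n : ℝ) ^ (α * β) := by
            gcongr
            calc (2 : ℝ) ^ β ≤ 2 ^ (1 : ℝ) :=
                  Real.rpow_le_rpow_of_exponent_le (by norm_num) (by linarith)
              _ = 2 := Real.rpow_one _
    calc δ ≤ 4 * (n : ℝ) ^ (-(1 / 2) : ℝ) * (2 * (n : ℝ) ^ (α * β)) := by rw [hδ]; gcongr
      _ = 8 * ((n : ℝ) ^ (-(1 / 2) : ℝ) * (n : ℝ) ^ (α * β)) := by ring
      _ = 8 * (n : ℝ) ^ (-(1 / 2 - α * β)) := by
          rw [← Real.rpow_add hn']; congr 2; ring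
      _ ≤ ε := by linarith
  have hδ0 : 0 ≤ δ := by rw [hδ]; positivity
  rw [Real.rpow_add hN0', mul_left_comm, ← hδ] at hres
  obtain ⟨P, hP⟩ : ∃ P : ℝ, P = (N : ℝ) ^ (1 / p.toReal) := ⟨_, rfl⟩
  obtain ⟨K, hK⟩ : ∃ K : ℝ, K = (k n : ℝ) ^ (1 / p.toReal) := ⟨_, rfl⟩
  rw [← hP, ← hK] at hres
  have hP0 : 0 ≤ P := by rw [hP]; positivity
  have hK0 : 0 ≤ K := by rw [hK]; positivity
  have h1 : P ≤ 4 * c * K := by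
    have a1 : c * (K * (1 + δ)) ≤ c * (K * 2) := by gcongr; linarith
    have a2 : c * δ ≤ 1 / 2 := le_trans (by gcongr) hε2
    have a3 : c * δ * P ≤ 1 / 2 * P := by gcongr
    nlinarith
  have h2 : (N : ℝ) ≤ (4 * c) ^ p.toReal * k n := by
    have := Real.rpow_le_rpow hP0 h1 p0.le
    rw [Real.mul_rpow (by positivity) hK0, hP, hK, ← Real.rpow_mul (by positivity),
      ← Real.rpow_mul (by positivity), one_div_mul_cancel p0.ne', Real.rpow_one, Real.rpow_one] at this
    exact this
  have h3 : 0 ≤ (n0 : ℝ) ^ α * k n := by positivity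
  calc (n : ℝ) ^ α ≤ N := hN1
    _ ≤ _ := h2
    _ ≤ _ := by rw [add_mul]; linarith

end
end

section
/- There is an absolute constant c₀ such that for every r with 1 ≤ r < 2, every n ∈ ℕ, and every bounded linear operator T : X → Y between real Banach spaces of rank at most n each of which is absolutely (r,1)-summing, one has π_1(T) ≤ c₀ · (1/r − 1/2)^{−1/2} · n^{1/2} · π_{r,1}(T). -/
open scoped ENNReal NNReal BigOperators

noncomputable section

theorem young_aux (q u v : ℝ) (hq : 1 ≤ q) (hu : 0 ≤ u) (hv : 0 ≤ v) :
    q * (u ^ (q - 1) * v) ≤ (q - 1) * u ^ q + v ^ q := by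
  have hq0 : 0 < q := by linarith
  have h := Real.geom_mean_le_arith_mean2_weighted (w₁ := (q - 1) / q) (w₂ := 1 / q)
    (p₁ := u ^ q) (p₂ := v ^ q) (div_nonneg (by linarith) hq0.le) (by positivity)
    (by positivity) (by positivity) (by field_simp; ring)
  rw [← Real.rpow_mul hu, ← Real.rpow_mul hv] at h
  have e1 : q * ((q - 1) / q) = q - 1 := by field_simp
  have e2 : q * (1 / q) = 1 := by field_simp
  rw [e1, e2, Real.rpow_one] at h
  have := mul_le_mul_of_nonneg_left h hq0.le
  refine this.trans (le_of_eq ?_)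
  field_simp

/-- Every finite family with `∑ |x_k| ≤ 1` has `ℓ_r`-sum of images at most `A`. -/
def FamBound {Y : Type*} [NormedAddCommGroup Y] [NormedSpace ℝ Y] {m : ℕ}
    (S : (Fin m → ℝ) →ₗ[ℝ] Y) (r A : ℝ) : Prop :=
  ∀ (N : ℕ) (x : Fin N → Fin m → ℝ), (∀ i, ∑ k, |x k i| ≤ 1) → ∑ k, ‖S (x k)‖ ^ r ≤ A

theorem pisier_aux {Y : Type*} [NormedAddCommGroup Y] [NormedSpace ℝ Y] {m : ℕ} (hm : 0 < m)
    (S : (Fin m → ℝ) →ₗ[ℝ] Y) (r P : ℝ) (hr : 1 ≤ r) (hr2 : r ≤ 2) (hP : 0 < P)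
    (hS : FamBound S r P) :
    ∃ w : Fin m → ℝ, (∀ i, 0 < w i) ∧ ∑ i, w i ≤ 2 ∧
      ∀ (F : Finset (Fin m)) (x : Fin m → ℝ), (∀ i, i ∉ F → x i = 0) → (∀ i, |x i| ≤ 1) →
        ‖S x‖ ^ r ≤ 2 * P * ∑ i ∈ F, w i := by
  have hr0 : 0 < r := by linarith
  have hm' : (0 : ℝ) < m := by exact_mod_cast hm
  set Z : Set ℝ := {b | ∃ (N : ℕ) (x : Fin N → Fin m → ℝ), (∀ i, ∑ k, |x k i| ≤ 1) ∧
    b = ∑ k, ‖S (x k)‖ ^ r} with hZ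
  have hZne : Z.Nonempty := ⟨_, 0, fun _ _ => 0, by simp, rfl⟩
  have hZb : BddAbove Z := ⟨P, by rintro b ⟨N, x, hx, rfl⟩; exact hS N x hx⟩
  set A := sSup Z with hA
  have hAP : A ≤ P := csSup_le hZne (by rintro b ⟨N, x, hx, rfl⟩; exact hS N x hx)
  have hAS : FamBound S r A := fun N x hx => le_csSup hZb ⟨N, x, hx, rfl⟩
  obtain ⟨b, ⟨N, x, hx, rfl⟩, hb⟩ := exists_lt_of_lt_csSup hZne
    (show A - P / m < sSup Z by have : 0 < P / m := by positivity
                                linarith)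
  set B := ∑ k, ‖S (x k)‖ ^ r with hB
  have hBA : B ≤ A := hAS N x hx
  have hphi : ∀ k, ∃ φ : Y →L[ℝ] ℝ, ‖φ‖ ≤ 1 ∧ φ (S (x k)) = ‖S (x k)‖ := by
    intro k
    obtain ⟨φ, h1, h2⟩ := exists_dual_vector'' ℝ (S (x k))
    exact ⟨φ, h1, by simpa using h2⟩
  choose φ hφ1 hφ2 using hphi
  set l : Fin m → ℝ := fun i => ∑ k, ‖S (x k)‖ ^ (r - 1) * φ k (S (Pi.single i (x k i))) with hl
  have hla : ∀ a : Fin m → ℝ, ∑ i, a i * l i =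
      ∑ k, ‖S (x k)‖ ^ (r - 1) * φ k (S (fun i => a i * x k i)) := by
    intro a
    have : ∀ k, S (fun i => a i * x k i) = ∑ i, a i • S (Pi.single i (x k i)) := by
      intro k
      rw [← Finset.univ_sum_single (fun i => a i * x k i), map_sum]
      refine Finset.sum_congr rfl fun i _ => ?_
      rw [← map_smul, ← Pi.single_smul, smul_eq_mul]
    simp only [this, map_sum, hl, Finset.mul_sum, map_smul, smul_eq_mul]
    rw [Finset.sum_comm]
    refine Finset.sum_congr rfl fun k _ => Finset.sum_congr rfl fun i _ => by ring
  have hsum : ∑ i, l i = B := by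
    have := hla (fun _ => 1)
    simp only [one_mul] at this
    rw [this, hB]
    refine Finset.sum_congr rfl fun k _ => ?_
    change _ * φ k (S (x k)) = _
    rw [hφ2]
    rcases (norm_nonneg (S (x k))).eq_or_lt with h | h
    · rw [← h, Real.zero_rpow hr0.ne', mul_zero]
    · nth_rewrite 2 [← Real.rpow_one ‖S (x k)‖]
      rw [← Real.rpow_add h]; congr 1; ring
  have hlb : ∀ a : Fin m → ℝ, r * ∑ i, a i * l i ≤
      (r - 1) * B + ∑ k, ‖S (fun i => a i * x k i)‖ ^ r := by
    intro a
    rw [hla, hB, Finset.mul_sum, Finset.mul_sum, ← Finset.sum_add_distrib]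
    refine Finset.sum_le_sum fun k _ => ?_
    refine le_trans ?_ (young_aux r _ _ hr (norm_nonneg _) (norm_nonneg _))
    gcongr
    refine (le_abs_self _).trans (((φ k).le_opNorm _).trans ?_)
    exact mul_le_of_le_one_left (norm_nonneg _) (hφ1 k)
  have hfam : ∀ a : Fin m → ℝ, (∀ i, |a i| ≤ 1) → ∀ i, ∑ k, |a i * x k i| ≤ |a i| := by
    intro a ha i
    simp only [abs_mul, ← Finset.mul_sum]
    exact mul_le_of_le_one_right (abs_nonneg _) (hx i)
  have hlA : ∑ i, |l i| ≤ A := by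
    have ha : ∀ i, |(SignType.sign (l i) : ℝ)| ≤ 1 := by
      intro i
      rcases lt_trichotomy (l i) 0 with h | h | h <;> simp [h]
    have h1 := hlb (fun i => SignType.sign (l i))
    have h2 := hAS N (fun k i => SignType.sign (l i) * x k i)
      (fun i => (hfam _ ha i).trans (ha i))
    simp only [sign_mul_self] at h1
    have h3 : r * ∑ i, |l i| ≤ r * A := by nlinarith
    exact le_of_mul_le_mul_left h3 hr0
  refine ⟨fun i => |l i| / P + 1 / m, fun i => by positivity, ?_, ?_⟩
  · rw [Finset.sum_add_distrib, ← Finset.sum_div]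
    have : (∑ i, |l i|) / P ≤ 1 := by
      rw [div_le_one hP]; linarith
    simp only [Finset.sum_const, Finset.card_univ, Fintype.card_fin, nsmul_eq_mul]
    have : (m : ℝ) * (1 / m) = 1 := by field_simp
    linarith
  · intro F y hyF hy
    rcases F.eq_empty_or_nonempty with rfl | hF
    · have : y = 0 := by ext i; exact hyF i (by simp)
      simp [this, Real.zero_rpow hr0.ne']
    classical
    set a : Fin m → ℝ := fun i => if i ∈ F then 0 else 1 with ha
    have ha1 : ∀ i, |a i| ≤ 1 := by intro i; simp only [ha]; split_ifs <;> simp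
    have h1 := hlb a
    have h2 := hAS (N + 1) (Fin.cons y (fun k i => a i * x k i)) (by
      intro i
      rw [Fin.sum_univ_succ]
      simp only [Fin.cons_zero, Fin.cons_succ]
      have := hfam a ha1 i
      by_cases hi : i ∈ F
      · have h0 : a i = 0 := by simp [ha, hi]
        rw [h0] at this ⊢
        have := hy i
        simp_all
      · rw [hyF i hi]
        have := ha1 i
        simp only [abs_zero, zero_add]; linarith)
    rw [Fin.sum_univ_succ] at h2
    simp only [Fin.cons_zero, Fin.cons_succ] at h2
    have h3 : ∑ i, a i * l i = B - ∑ i ∈ F, l i := by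
      rw [← hsum, eq_sub_iff_add_eq, ← Finset.sum_filter_add_sum_filter_not Finset.univ (· ∈ F) l]
      simp only [ha, ite_mul, zero_mul, one_mul, Finset.sum_ite]
      simp [add_comm]
    rw [h3] at h1
    have h4 : ∑ i ∈ F, l i ≤ ∑ i ∈ F, |l i| := Finset.sum_le_sum fun i _ => le_abs_self _
    have h5 : 0 ≤ ∑ i ∈ F, |l i| := Finset.sum_nonneg fun i _ => abs_nonneg _
    have h6 : P / m ≤ P * ∑ i ∈ F, (1 : ℝ) / m := by
      have : (1 : ℝ) ≤ F.card := by exact_mod_cast hF.card_pos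
      simp only [Finset.sum_const, nsmul_eq_mul]
      have e : P * (F.card * (1 / m)) = F.card * (P / m) := by ring
      rw [e]
      exact le_mul_of_one_le_left (by positivity) this
    have h7 : P * ∑ i ∈ F, |l i| / P = ∑ i ∈ F, |l i| := by
      rw [← Finset.sum_div]; field_simp
    have h8 : 0 < P / m := by positivity
    rw [Finset.sum_add_distrib, mul_assoc, mul_add, h7]
    nlinarith

theorem geom_aux (s : ℝ) (hs : 0 < s) (hs1 : s ≤ 1) (J : ℕ) :
    ∑ j ∈ Finset.range J, ((4 : ℝ)⁻¹ ^ j) ^ s ≤ 2 / s := by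
  have h4 : (1 : ℝ) + s ≤ 4 ^ s := by
    have h := Real.add_one_le_exp s
    have : Real.exp s ≤ 4 ^ s := by
      rw [← Real.exp_one_rpow]
      exact Real.rpow_le_rpow (Real.exp_pos _).le (by linarith [Real.exp_one_lt_d9]) hs.le
    linarith
  set t : ℝ := (4 : ℝ)⁻¹ ^ s with ht
  have ht0 : 0 ≤ t := by positivity
  have ht1 : t ≤ 1 - s / 2 := by
    rw [ht, Real.inv_rpow (by norm_num)]
    rw [inv_le_comm₀ (by positivity) (by linarith)]
    refine le_trans ?_ h4
    rw [inv_le_iff_one_le_mul₀ (by linarith)]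
    nlinarith
  have e : ∀ j : ℕ, ((4 : ℝ)⁻¹ ^ j) ^ s = t ^ j := by
    intro j
    rw [ht, ← Real.rpow_natCast, ← Real.rpow_natCast, ← Real.rpow_mul (by norm_num),
      ← Real.rpow_mul (by norm_num), mul_comm]
  simp only [e]
  have h1 := geom_sum_mul_neg t J
  have h2 : 0 ≤ ∑ j ∈ Finset.range J, t ^ j := Finset.sum_nonneg fun j _ => by positivity
  have h3 : 0 ≤ t ^ J := by positivity
  rw [le_div_iff₀ hs]
  nlinarith

theorem dyadic_aux (p : ℝ) (hp : 1 / 2 < p) (hp1 : p ≤ 1) (J : ℕ) (μ : ℕ → ℝ)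
    (hμ : ∀ j, 0 ≤ μ j) (h : ∑ j ∈ Finset.range J, 4 ^ j * μ j ≤ 1) :
    ∑ j ∈ Finset.range J, 2 ^ j * μ j ^ p ≤ (p - 1 / 2) ^ (-(1 / 2) : ℝ) := by
  have hμ4 : ∀ j ∈ Finset.range J, μ j ≤ (4 : ℝ)⁻¹ ^ j := by
    intro j hj
    have := Finset.single_le_sum (f := fun j => (4 : ℝ) ^ j * μ j)
      (fun i _ => mul_nonneg (by positivity) (hμ i)) hj
    rw [inv_pow, ← one_div, le_div_iff₀ (by positivity)]
    linarith
  have hcs := Finset.sum_mul_sq_le_sq_mul_sq (Finset.range J)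
    (fun j => 2 ^ j * μ j ^ (1 / 2 : ℝ)) (fun j => μ j ^ (p - 1 / 2))
  have e1 : ∀ j, 2 ^ j * μ j ^ (1 / 2 : ℝ) * μ j ^ (p - 1 / 2) = 2 ^ j * μ j ^ p := by
    intro j
    rw [mul_assoc, ← Real.rpow_add_of_nonneg (hμ j) (by norm_num) (by linarith)]
    congr 2; ring
  have e2 : ∀ j, (2 ^ j * μ j ^ (1 / 2 : ℝ)) ^ 2 = 4 ^ j * μ j := by
    intro j
    rw [mul_pow, ← Real.sqrt_eq_rpow, Real.sq_sqrt (hμ j), ← pow_mul, mul_comm j 2, pow_mul]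
    norm_num
  have e3 : ∀ j, (μ j ^ (p - 1 / 2)) ^ 2 = μ j ^ (2 * p - 1) := by
    intro j
    rw [← Real.rpow_natCast, ← Real.rpow_mul (hμ j)]
    congr 1; push_cast; ring
  simp only [e1, e2, e3] at hcs
  have h3 : ∑ j ∈ Finset.range J, μ j ^ (2 * p - 1) ≤ (p - 1 / 2)⁻¹ := by
    calc _ ≤ ∑ j ∈ Finset.range J, ((4 : ℝ)⁻¹ ^ j) ^ (2 * p - 1) :=
          Finset.sum_le_sum fun j hj => Real.rpow_le_rpow (hμ j) (hμ4 j hj) (by linarith)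
      _ ≤ 2 / (2 * p - 1) := geom_aux _ (by linarith) (by linarith) J
      _ = _ := by
        have : p - 1 / 2 ≠ 0 := by linarith
        have : 2 * p - 1 ≠ 0 := by linarith
        rw [show 2 * p - 1 = 2 * (p - 1 / 2) by ring]; field_simp
  have h4 : 0 ≤ ∑ j ∈ Finset.range J, μ j ^ (2 * p - 1) :=
    Finset.sum_nonneg fun j _ => Real.rpow_nonneg (hμ j) _
  rw [Real.rpow_neg (by linarith), ← Real.inv_rpow (by linarith), ← Real.sqrt_eq_rpow]
  apply Real.le_sqrt_of_sq_le
  have h5 : 0 ≤ ∑ j ∈ Finset.range J, 4 ^ j * μ j :=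
    Finset.sum_nonneg fun j _ => mul_nonneg (by positivity) (hμ j)
  nlinarith

theorem maurey_aux {Y : Type*} [NormedAddCommGroup Y] [NormedSpace ℝ Y] {m : ℕ}
    (S : (Fin m → ℝ) →ₗ[ℝ] Y) (r P : ℝ) (hr : 1 ≤ r) (hr2 : r < 2) (hP : 0 < P)
    (w : Fin m → ℝ) (hw : ∀ i, 0 < w i) (hw2 : ∑ i, w i ≤ 2)
    (hS : ∀ (F : Finset (Fin m)) (x : Fin m → ℝ), (∀ i, i ∉ F → x i = 0) → (∀ i, |x i| ≤ 1) →
        ‖S x‖ ^ r ≤ 2 * P ^ r * ∑ i ∈ F, w i)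
    (x : Fin m → ℝ) (hx : ∑ i, w i * x i ^ 2 ≤ 1) :
    ‖S x‖ ≤ 12 * P * (1 / r - 1 / 2) ^ (-(1 / 2) : ℝ) := by
  classical
  have hr0 : 0 < r := by linarith
  set p := 1 / r with hp
  have hp1 : p ≤ 1 := by rw [hp, div_le_one hr0]; exact hr
  have hp2 : 1 / 2 < p := by rw [hp]; exact one_div_lt_one_div_of_lt hr0 hr2
  have hrp : r * p = 1 := by rw [hp]; field_simp
  have key : ∀ (F : Finset (Fin m)) (y : Fin m → ℝ) (t : ℝ), 0 < t → (∀ i, i ∉ F → y i = 0) →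
      (∀ i, |y i| ≤ t) → ‖S y‖ ≤ t * (2 * P * (∑ i ∈ F, w i) ^ p) := by
    intro F y t ht h1 h2
    have hF : 0 ≤ ∑ i ∈ F, w i := Finset.sum_nonneg fun i _ => (hw i).le
    have h3 := hS F (t⁻¹ • y) (fun i hi => by simp [h1 i hi]) (fun i => by
      rw [Pi.smul_apply, smul_eq_mul, abs_mul, abs_of_pos (inv_pos.2 ht), inv_mul_le_iff₀ ht]
      simpa using h2 i)
    have h4 := Real.rpow_le_rpow (by positivity) h3 (show 0 ≤ p by linarith)
    rw [← Real.rpow_mul (norm_nonneg _), hrp, Real.rpow_one, Real.mul_rpow (by positivity) hF,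
      Real.mul_rpow (by norm_num) (by positivity), ← Real.rpow_mul hP.le, hrp, Real.rpow_one,
      map_smul, norm_smul, Real.norm_of_nonneg (inv_pos.2 ht).le, inv_mul_le_iff₀ ht] at h4
    refine h4.trans ?_
    have : (2 : ℝ) ^ p ≤ 2 := by
      calc (2 : ℝ) ^ p ≤ 2 ^ (1 : ℝ) := Real.rpow_le_rpow_of_exponent_le (by norm_num) hp1
        _ = 2 := by norm_num
    gcongr
  have hex : ∀ i, ∃ j : ℕ, |x i| ≤ 2 ^ j := by
    intro i
    obtain ⟨j, hj⟩ := pow_unbounded_of_one_lt |x i| (one_lt_two)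
    exact ⟨j, hj.le⟩
  set J : Fin m → ℕ := fun i => Nat.find (hex i) with hJ
  have hJ1 : ∀ i, |x i| ≤ 2 ^ J i := fun i => Nat.find_spec (hex i)
  have hJ2 : ∀ i j, J i = j + 1 → 2 ^ j < |x i| := by
    intro i j h
    have := Nat.find_min (hex i) (m := j) (by change j < J i; omega)
    exact not_le.1 this
  obtain ⟨M, hM⟩ : ∃ M, ∀ i, J i < M + 1 :=
    ⟨Finset.univ.sup J, fun i => Nat.lt_succ_of_le (Finset.le_sup (Finset.mem_univ i))⟩
  set F : ℕ → Finset (Fin m) := fun j => Finset.univ.filter fun i => J i = j with hF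
  set y : ℕ → Fin m → ℝ := fun j i => if J i = j then x i else 0 with hy
  have hxy : x = ∑ j ∈ Finset.range (M + 1), y j := by
    ext i
    rw [Finset.sum_apply]
    simp [hy, hM i]
  have hyb : ∀ j, ‖S (y j)‖ ≤ 2 ^ j * (2 * P * (∑ i ∈ F j, w i) ^ p) := by
    intro j
    refine key (F j) (y j) (2 ^ j) (by positivity) ?_ ?_
    · intro i hi
      simp only [hF, Finset.mem_filter, Finset.mem_univ, true_and] at hi
      simp [hy, hi]
    · intro i
      simp only [hy]
      split_ifs with h
      · rw [← h]; exact hJ1 i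
      · simp
  set μ : ℕ → ℝ := fun j => ∑ i ∈ F (j + 1), w i with hμ
  have hμ0 : ∀ j, 0 ≤ μ j := fun j => Finset.sum_nonneg fun i _ => (hw i).le
  have hμ1 : ∑ j ∈ Finset.range M, 4 ^ j * μ j ≤ 1 := by
    refine le_trans ?_ hx
    calc ∑ j ∈ Finset.range M, 4 ^ j * μ j
        ≤ ∑ j ∈ Finset.range M, ∑ i ∈ F (j + 1), w i * x i ^ 2 := by
          refine Finset.sum_le_sum fun j _ => ?_
          rw [hμ, Finset.mul_sum]
          refine Finset.sum_le_sum fun i hi => ?_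
          simp only [hF, Finset.mem_filter, Finset.mem_univ, true_and] at hi
          have h := hJ2 i j hi
          rw [mul_comm]
          refine mul_le_mul_of_nonneg_left ?_ (hw i).le
          rw [← sq_abs, show (4 : ℝ) = 2 ^ 2 by norm_num, ← pow_mul, mul_comm 2 j, pow_mul]
          exact pow_le_pow_left₀ (by positivity) h.le 2
      _ ≤ ∑ j ∈ Finset.range (M + 1), ∑ i ∈ F j, w i * x i ^ 2 := by
          rw [Finset.sum_range_succ']
          exact le_add_of_nonneg_right (Finset.sum_nonneg fun i _ =>
            mul_nonneg (hw i).le (sq_nonneg _))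
      _ = ∑ i, w i * x i ^ 2 :=
          Finset.sum_fiberwise_of_maps_to (fun i _ => Finset.mem_range.2 (hM i)) _
  have hd := dyadic_aux p hp2 hp1 M μ hμ0 hμ1
  set K := (p - 1 / 2) ^ (-(1 / 2) : ℝ) with hK
  have hK1 : 1 ≤ K := Real.one_le_rpow_of_pos_of_le_one_of_nonpos (by linarith) (by linarith)
    (by norm_num)
  have h0 : ‖S (y 0)‖ ≤ 4 * P := by
    refine (hyb 0).trans ?_
    have h1 : ∑ i ∈ F 0, w i ≤ 2 := le_trans
      (Finset.sum_le_sum_of_subset_of_nonneg (Finset.subset_univ _) fun i _ _ => (hw i).le) hw2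
    have h2 : (∑ i ∈ F 0, w i) ^ p ≤ 2 := by
      calc _ ≤ (2 : ℝ) ^ p := Real.rpow_le_rpow (Finset.sum_nonneg fun i _ => (hw i).le) h1
            (by linarith)
        _ ≤ 2 ^ (1 : ℝ) := Real.rpow_le_rpow_of_exponent_le (by norm_num) hp1
        _ = 2 := by norm_num
    nlinarith
  calc ‖S x‖ ≤ ∑ j ∈ Finset.range (M + 1), ‖S (y j)‖ := by
        conv_lhs => rw [hxy, map_sum]
        exact norm_sum_le _ _
    _ ≤ 4 * P * ∑ j ∈ Finset.range M, 2 ^ j * μ j ^ p + 4 * P := by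
        rw [Finset.sum_range_succ', Finset.mul_sum]
        refine add_le_add (Finset.sum_le_sum fun j _ => ?_) h0
        refine (hyb (j + 1)).trans (le_of_eq ?_)
        rw [pow_succ]; ring
    _ ≤ 4 * P * K + 4 * P * K := by
        refine add_le_add (mul_le_mul_of_nonneg_left hd (by positivity)) ?_
        exact le_mul_of_one_le_right (by positivity) hK1
    _ ≤ 12 * P * K := by
        have : 0 ≤ P * K := by positivity
        linarith

/-- Hilbert-Schmidt type estimate: an operator of rank at most `n` on Euclidean space. -/
theorem hs_aux {Y : Type*} [NormedAddCommGroup Y] [NormedSpace ℝ Y] {m n : ℕ}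
    (S : EuclideanSpace ℝ (Fin m) →ₗ[ℝ] Y) (hn : Module.finrank ℝ (LinearMap.range S) ≤ n)
    (K : ℝ) (hK : 0 ≤ K) (hS : ∀ h, ‖S h‖ ≤ K * ‖h‖) :
    ∑ i, ‖S (EuclideanSpace.single i 1)‖ ^ 2 ≤ K ^ 2 * n := by
  set V := (LinearMap.ker S)ᗮ with hV
  have hdim : Module.finrank ℝ V ≤ n := by
    have h1 := LinearMap.finrank_range_add_finrank_ker S
    have h2 := Submodule.finrank_add_finrank_orthogonal (LinearMap.ker S)
    rw [← hV] at h2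
    omega
  set b := stdOrthonormalBasis ℝ V with hb
  have hproj : ∀ h, ‖S h‖ ^ 2 ≤ K ^ 2 * ∑ k, (inner ℝ (b k : EuclideanSpace ℝ (Fin m)) h) ^ 2 := by
    intro h
    have e : S h = S (V.orthogonalProjectionOnto h : EuclideanSpace ℝ (Fin m)) := by
      have : h - V.orthogonalProjectionOnto h ∈ Vᗮ := V.sub_starProjection_mem_orthogonal h
      rw [show Vᗮ = LinearMap.ker S from Submodule.orthogonal_orthogonal _, LinearMap.mem_ker, map_sub, sub_eq_zero] at this
      exact this
    have e2 : ‖(V.orthogonalProjectionOnto h : EuclideanSpace ℝ (Fin m))‖ ^ 2 =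
        ∑ k, (inner ℝ (b k : EuclideanSpace ℝ (Fin m)) h) ^ 2 := by
      rw [show ‖(V.orthogonalProjectionOnto h : EuclideanSpace ℝ (Fin m))‖ =
        ‖V.orthogonalProjectionOnto h‖ from rfl, ← b.sum_sq_norm_inner_right]
      refine Finset.sum_congr rfl fun k _ => ?_
      rw [Submodule.inner_orthogonalProjectionOnto_eq_of_mem_left]
      simp
    rw [← e2, e, ← mul_pow]
    exact pow_le_pow_left₀ (norm_nonneg _) (hS _) 2
  calc _ ≤ ∑ i : Fin m, K ^ 2 * ∑ k, (inner ℝ (b k : EuclideanSpace ℝ (Fin m))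
        (EuclideanSpace.single i 1)) ^ 2 := Finset.sum_le_sum fun i _ => hproj _
    _ = K ^ 2 * ∑ k, ‖(b k : EuclideanSpace ℝ (Fin m))‖ ^ 2 := by
        rw [← Finset.mul_sum, Finset.sum_comm]
        congr 1
        refine Finset.sum_congr rfl fun k _ => ?_
        rw [EuclideanSpace.norm_sq_eq]
        refine Finset.sum_congr rfl fun i _ => ?_
        simp [EuclideanSpace.inner_single_right]
    _ ≤ K ^ 2 * n := by
        have : ∀ k, ‖(b k : EuclideanSpace ℝ (Fin m))‖ = 1 := fun k => b.orthonormal.1 k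
        simp only [this, one_pow, Finset.sum_const, Finset.card_univ, Fintype.card_fin,
          nsmul_eq_mul, mul_one]
        gcongr

theorem main_aux {Y : Type*} [NormedAddCommGroup Y] [NormedSpace ℝ Y] {m n : ℕ}
    (S : (Fin m → ℝ) →ₗ[ℝ] Y) (hn : Module.finrank ℝ (LinearMap.range S) ≤ n)
    (r P : ℝ) (hr : 1 ≤ r) (hr2 : r < 2) (hP : 0 ≤ P) (hS : FamBound S r (P ^ r)) :
    ∑ i, ‖S (Pi.single i 1)‖ ≤
      24 * (1 / r - 1 / 2) ^ (-(1 / 2) : ℝ) * (n : ℝ) ^ ((1 : ℝ) / 2) * P := by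
  have hr0 : 0 < r := by linarith
  have hsub : 0 < 1 / r - 1 / 2 := sub_pos.2 (one_div_lt_one_div_of_lt hr0 hr2)
  rcases hP.eq_or_lt with rfl | hP
  · have : ∀ i, S (Pi.single i 1) = 0 := by
      intro i
      have h := hS 1 (fun _ => Pi.single i 1) (fun j => by
        by_cases h : j = i
        · subst h; simp
        · simp [h])
      rw [Real.zero_rpow hr0.ne', Fin.sum_univ_one] at h
      have h2 := le_antisymm h (by positivity)
      rw [Real.rpow_eq_zero (norm_nonneg _) hr0.ne'] at h2
      exact norm_eq_zero.1 h2
    simp [this]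
  rcases Nat.eq_zero_or_pos m with rfl | hm
  · have := Real.rpow_nonneg hsub.le (-(1 / 2))
    rw [Finset.univ_eq_empty, Finset.sum_empty]
    positivity
  obtain ⟨w, hw, hw2, hSw⟩ := pisier_aux hm S r (P ^ r) hr hr2.le (by positivity) hS
  have hM := maurey_aux S r P hr hr2 hP w hw hw2 hSw
  set K := 12 * P * (1 / r - 1 / 2) ^ (-(1 / 2) : ℝ) with hK
  have hK0 : 0 ≤ K := by positivity
  have hs : ∀ i, 0 < √(w i) := fun i => Real.sqrt_pos.2 (hw i)
  let D : EuclideanSpace ℝ (Fin m) →ₗ[ℝ] (Fin m → ℝ) :=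
    { toFun := fun h i => h i / √(w i)
      map_add' := fun a b => by ext i; simp [add_div]
      map_smul' := fun a b => by ext i; simp [mul_div_assoc] }
  have hD : ∀ h i, D h i = h i / √(w i) := fun h i => rfl
  have hbound : ∀ h, ‖(S ∘ₗ D) h‖ ≤ K * ‖h‖ := by
    intro h
    rcases eq_or_ne h 0 with rfl | hh
    · simp
    have hh' : 0 < ‖h‖ := norm_pos_iff.2 hh
    have := hM (‖h‖⁻¹ • D h) (by
      have e : ∀ i, w i * (‖h‖⁻¹ • D h) i ^ 2 = (‖h‖ ^ 2)⁻¹ * ‖h i‖ ^ 2 := by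
        intro i
        rw [Pi.smul_apply, smul_eq_mul, hD, mul_pow, div_pow, Real.sq_sqrt (hw i).le,
          Real.norm_eq_abs, sq_abs]
        have := (hw i).ne'
        field_simp
      simp only [e]
      rw [← Finset.mul_sum, ← EuclideanSpace.norm_sq_eq, inv_mul_cancel₀ (by positivity)])
    rw [map_smul, norm_smul, norm_inv, norm_norm, inv_mul_le_iff₀ hh'] at this
    rw [LinearMap.comp_apply, mul_comm]; exact this
  have hrank : Module.finrank ℝ (LinearMap.range (S ∘ₗ D)) ≤ n :=
    le_trans (Submodule.finrank_mono (LinearMap.range_comp_le_range D S)) hn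
  have hHS := hs_aux (S ∘ₗ D) hrank K hK0 hbound
  have hei : ∀ i, ‖S (Pi.single i 1)‖ = √(w i) * ‖(S ∘ₗ D) (EuclideanSpace.single i 1)‖ := by
    intro i
    have : (Pi.single i 1 : Fin m → ℝ) = √(w i) • D (EuclideanSpace.single i 1) := by
      ext j
      rw [Pi.smul_apply, hD]
      by_cases h : j = i
      · subst h; have := (hs j).ne'; simp; field_simp
      · simp [h]
    rw [this, map_smul, norm_smul, Real.norm_of_nonneg (hs i).le, LinearMap.comp_apply]
  simp only [hei]
  have hcs := Finset.sum_mul_sq_le_sq_mul_sq Finset.univ (fun i => √(w i))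
    (fun i => ‖(S ∘ₗ D) (EuclideanSpace.single i 1)‖)
  simp only [Real.sq_sqrt (hw _).le] at hcs
  have hfin : (∑ i, √(w i) * ‖(S ∘ₗ D) (EuclideanSpace.single i 1)‖) ^ 2 ≤
      (2 * K * √n) ^ 2 := by
    rw [mul_pow, Real.sq_sqrt (by positivity)]
    have h0 : 0 ≤ ∑ i, ‖(S ∘ₗ D) (EuclideanSpace.single i 1)‖ ^ 2 :=
      Finset.sum_nonneg fun i _ => by positivity
    have : 0 ≤ K ^ 2 * n := by positivity
    nlinarith
  have := abs_le_of_sq_le_sq hfin (by positivity)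
  refine (le_abs_self _).trans (this.trans (le_of_eq ?_))
  rw [← Real.sqrt_eq_rpow, hK]; ring

/-- there is an absolute constant `c₀` such that for `1 ≤ r < 2`
and any absolutely `(r,1)`-summing operator `T` of rank at most `n`,
`π_1(T) ≤ c₀ (1/r - 1/2)^{-1/2} n^{1/2} π_{r,1}(T)`. -/
theorem statement8 :
    ∃ c₀ : ℝ, 0 < c₀ ∧
      ∀ (r : ℝ), 1 ≤ r → r < 2 →
        ∀ (n : ℕ) (X Y : Type*) [NormedAddCommGroup X] [NormedSpace ℝ X] [CompleteSpace X]
          [NormedAddCommGroup Y] [NormedSpace ℝ Y] [CompleteSpace Y]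
          (T : X →L[ℝ] Y), RankLE T n → piPQ (ENNReal.ofReal r) 1 T < ∞ →
          piPQ 1 1 T ≤
            ENNReal.ofReal (c₀ * (1 / r - 1 / 2) ^ (-(1 / 2) : ℝ) * (n : ℝ) ^ ((1 : ℝ) / 2)) *
              piPQ (ENNReal.ofReal r) 1 T := by
  refine ⟨24, by norm_num, ?_⟩
  intro r hr hr2 n X Y _ _ _ _ _ _ T hT hfin
  have hr0 : 0 < r := by linarith
  set Q := piPQ (ENNReal.ofReal r) 1 T with hQ
  have hQP : Q = ENNReal.ofReal Q.toReal := (ENNReal.ofReal_toReal hfin.ne).symm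
  have hweak : ∀ {N : ℕ} (x : Fin N → X), weakLq 1 x ≤ 1 ↔
      ∀ f : X →L[ℝ] ℝ, ‖f‖ ≤ 1 → ∑ k, |f (x k)| ≤ 1 := by
    intro N x
    unfold weakLq eSum
    simp only [ENNReal.one_ne_top, if_false, ENNReal.toReal_one, ENNReal.rpow_one, div_one,
      iSup_le_iff, Subtype.forall]
    refine forall_congr' fun f => forall_congr' fun _ => ?_
    rw [← ENNReal.ofReal_sum_of_nonneg fun i _ => abs_nonneg _, ENNReal.ofReal_le_one]
  refine iSup_le fun m => iSup_le fun ⟨x, hx⟩ => ?_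
  rw [hweak] at hx
  have hLHS : (eSum 1 fun k => ENNReal.ofReal ‖T (x k)‖) = ENNReal.ofReal (∑ k, ‖T (x k)‖) := by
    unfold eSum
    simp only [ENNReal.one_ne_top, if_false, ENNReal.toReal_one, ENNReal.rpow_one, div_one]
    rw [ENNReal.ofReal_sum_of_nonneg fun i _ => norm_nonneg _]
  change (eSum 1 fun k => ENNReal.ofReal ‖T (x k)‖) ≤ _
  rw [hLHS, hQP, ← ENNReal.ofReal_mul' ENNReal.toReal_nonneg]
  apply ENNReal.ofReal_le_ofReal
  let U : (Fin m → ℝ) →ₗ[ℝ] X := Fintype.linearCombination ℝ x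
  have hU : ∀ a, U a = ∑ i, a i • x i := fun a => Fintype.linearCombination_apply ..
  let S : (Fin m → ℝ) →ₗ[ℝ] Y := (T : X →ₗ[ℝ] Y) ∘ₗ U
  have hSn : Module.finrank ℝ (LinearMap.range S) ≤ n := by
    have := hT.1
    exact le_trans (Submodule.finrank_mono (LinearMap.range_comp_le_range U _)) hT.2
  have hSe : ∀ i, S (Pi.single i 1) = T (x i) := by
    intro i
    change T (U _) = _
    rw [hU]; congr 1
    simp [Pi.single_apply]
  have hFB : FamBound S r (Q.toReal ^ r) := by
    intro N a ha
    have hw : weakLq 1 (fun k => U (a k)) ≤ 1 := by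
      rw [hweak]
      intro f hf
      calc ∑ k, |f (U (a k))| ≤ ∑ k, ∑ i, |a k i| * |f (x i)| := by
            refine Finset.sum_le_sum fun k _ => ?_
            rw [hU, map_sum]
            refine (Finset.abs_sum_le_sum_abs _ _).trans (le_of_eq ?_)
            simp [abs_mul]
        _ = ∑ i, (∑ k, |a k i|) * |f (x i)| := by
            rw [Finset.sum_comm]; simp only [Finset.sum_mul]
        _ ≤ ∑ i, |f (x i)| := Finset.sum_le_sum fun i _ =>
            mul_le_of_le_one_left (abs_nonneg _) (ha i)
        _ ≤ 1 := hx f hf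
    have h1 : (eSum (ENNReal.ofReal r) fun k => ENNReal.ofReal ‖T (U (a k))‖) ≤ Q :=
      le_trans (le_iSup (fun x : {x : Fin N → X // weakLq 1 x ≤ 1} =>
        eSum (ENNReal.ofReal r) fun k => ENNReal.ofReal ‖T (x.1 k)‖) ⟨_, hw⟩)
        (le_iSup (fun n => piN (ENNReal.ofReal r) 1 n T) N)
    unfold eSum at h1
    rw [if_neg ENNReal.ofReal_ne_top, ENNReal.toReal_ofReal hr0.le] at h1
    simp only [ENNReal.ofReal_rpow_of_nonneg (norm_nonneg _) hr0.le] at h1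
    rw [← ENNReal.ofReal_sum_of_nonneg fun i _ => by positivity] at h1
    rw [one_div, ENNReal.rpow_inv_le_iff hr0, hQP,
      ENNReal.ofReal_rpow_of_nonneg ENNReal.toReal_nonneg hr0.le,
      ENNReal.ofReal_le_ofReal_iff (by positivity)] at h1
    exact h1
  have := main_aux S hSn r Q.toReal hr hr2 ENNReal.toReal_nonneg hFB
  simpa only [hSe] using this

end
end
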